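/- Under the Setup, a closed set E′ ⊆ X is T-small if and only if μ(Ω×E′) = 0 for every μ ∈ I_P(E). -/

import Mathlib

open MeasureTheory Set Filter Topology
open scoped ENNReal

section Defs

variable {Ω X Y : Type*}

/-- The fiber of a set `E ⊆ Ω × X` over `ω`. -/
def fiber (E : Set (Ω × X)) (ω : Ω) : Set X := {x | (ω, x) ∈ E}

/-- The iterates `T^n_ω = T_{θ^{n-1}ω} ∘ ⋯ ∘ T_ω` of a bundle RDS. -/
def itr (T : Ω → X → X) (θ : Ω → Ω) : ℕ → Ω → X → X
  | 0, _ => id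
  | n + 1, ω => itr T θ n (θ ω) ∘ T ω

/-- Two families of sets with common index set are combinatorially equivalent if
the corresponding sub-intersections are simultaneously nonempty. -/
def CombEquiv {ι : Type*} (A B : ι → Set Y) : Prop :=
  ∀ J : Set ι, (⋂ i ∈ J, A i).Nonempty ↔ (⋂ i ∈ J, B i).Nonempty

section Top

variable [TopologicalSpace X] [TopologicalSpace Y]

/-- A family of open sets covering the whole space. -/
def IsOpenCover {ι : Type*} (U : ι → Set X) : Prop :=
  (∀ i, IsOpen (U i)) ∧ (⋃ i, U i) = univ

/-- A family of relatively open subsets of `K` covering `K`. -/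
def IsOpenCoverOn (K : Set X) {ι : Type*} (U : ι → Set X) : Prop :=
  (∀ i, ∃ V : Set X, IsOpen V ∧ U i = V ∩ K) ∧ K ⊆ ⋃ i, U i

/-- `1 + ord`: the maximal multiplicity `sup_{x ∈ K} Σ_i 1_{U i}(x)` of the family `U` on `K`. -/
noncomputable def multOn (K : Set X) {ι : Type*} [Fintype ι] (U : ι → Set X) : ℕ :=
  sSup {m | ∃ x ∈ K, m = Nat.card {i // x ∈ U i}}

/-- `ord(U) = -1 + sup_{x ∈ K} Σ_i 1_{U i}(x)` (as a truncated natural number). -/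
noncomputable def ordOn (K : Set X) {ι : Type*} [Fintype ι] (U : ι → Set X) : ℕ :=
  multOn K U - 1

/-- `V` refines `U` if every member of `V` is contained in some member of `U`. -/
def Refines {ι κ : Type*} (V : κ → Set X) (U : ι → Set X) : Prop :=
  ∀ j, ∃ i, V j ⊆ U i

/-- `D(U) = min { ord(V) : V a finite relatively open cover of K refining U }`. -/
noncomputable def DOn (K : Set X) {ι : Type*} [Fintype ι] (U : ι → Set X) : ℕ :=
  sInf {q | ∃ (m : ℕ) (V : Fin m → Set X),
    IsOpenCoverOn K V ∧ Refines V U ∧ ordOn K V = q}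

/-- `f : X → Y` is `U`-compatible if some finite open cover of `Y` pulls back to
a refinement of `U`. -/
def Compatible {ι : Type*} (U : ι → Set X) (f : X → Y) : Prop :=
  ∃ (m : ℕ) (W : Fin m → Set Y), IsOpenCover W ∧ Refines (fun j => f ⁻¹' (W j)) U

/-- The covering dimension `dim Y = sup { D(V) : V a finite open cover of Y }`. -/
noncomputable def covDim (Z : Type*) [TopologicalSpace Z] : ℕ∞ :=
  ⨆ (m : ℕ) (V : Fin m → Set Z) (_ : IsOpenCover V), (DOn (univ : Set Z) V : ℕ∞)

/-- The dynamical cover `α_0^{n-1}(ω|E) = ⋁_{i=0}^{n-1} (T^i_ω)⁻¹ α(θ^i ω|E)` of the fiber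
`E_ω`, indexed by `Fin n → ι`. -/
def dynCover (T : Ω → X → X) (θ : Ω → Ω) (E : Set (Ω × X)) {ι : Type*}
    (U : ι → Set X) (n : ℕ) (ω : Ω) : (Fin n → ι) → Set X :=
  fun j => fiber E ω ∩
    ⋂ i : Fin n, (itr T θ (i : ℕ) ω) ⁻¹' (U (j i) ∩ fiber E (θ^[(i : ℕ)] ω))

end Top

/-- `Σ_{i=0}^{n-1} 1_A (T^i_ω x)`: the number of times the orbit of `x` up to time `n`
visits `A`. -/
noncomputable def orbCount (T : Ω → X → X) (θ : Ω → Ω) (A : Set X)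
    (n : ℕ) (ω : Ω) (x : X) : ℕ :=
  Nat.card {i : Fin n // itr T θ (i : ℕ) ω x ∈ A}

/-- `b_n(ω) = sup_{x ∈ E_ω} Σ_{i=0}^{n-1} 1_A (T^i_ω x)`. -/
noncomputable def bsup (T : Ω → X → X) (θ : Ω → Ω) (E : Set (Ω × X)) (A : Set X)
    (n : ℕ) (ω : Ω) : ℕ :=
  sSup {m | ∃ x ∈ fiber E ω, m = orbCount T θ A n ω x}

/-- The `ω`-orbit capacity `ocap^ω(A) = lim_{n→∞} (1/n) b_n(ω)` (as a `limsup`). -/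
noncomputable def ocap (T : Ω → X → X) (θ : Ω → Ω) (E : Set (Ω × X)) (A : Set X)
    (ω : Ω) : ℝ :=
  Filter.atTop.limsup (fun n : ℕ => (bsup T θ E A n ω : ℝ) / n)

section Metric

variable [PseudoMetricSpace X]

/-- The Bowen-type metric `d^ω_{ε,n}(x,y) = max_{0 ≤ k < n} d(T^k_ω x, T^k_ω y)/ε`. -/
noncomputable def dBowen (T : Ω → X → X) (θ : Ω → Ω) (ε : ℝ) (n : ℕ) (ω : Ω)
    (x y : X) : ℝ :=
  ⨆ k : Fin n, dist (itr T θ (k : ℕ) ω x) (itr T θ (k : ℕ) ω y) / ε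

/-- The diameter of a set with respect to a (not necessarily standard) metric `ρ`. -/
noncomputable def diamIn (ρ : X → X → ℝ) (A : Set X) : ℝ :=
  sSup {r | ∃ x ∈ A, ∃ y ∈ A, r = ρ x y}

/-- `cov(ω,ε,n)`: the minimal cardinality of a cover of `E_ω` by sets of
`d^ω_{ε,n}`-diameter strictly less than 1. -/
noncomputable def covN (T : Ω → X → X) (θ : Ω → Ω) (E : Set (Ω × X))
    (ε : ℝ) (n : ℕ) (ω : Ω) : ℕ :=
  sInf {m | ∃ A : Fin m → Set X, fiber E ω ⊆ (⋃ j, A j) ∧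
    ∀ j, diamIn (dBowen T θ ε n ω) (A j) < 1}

/-- `sep(ω,ε,n)`: the maximal cardinality of a subset of `E_ω` whose distinct points are
at `d^ω_{ε,n}`-distance at least 1. -/
noncomputable def sepN (T : Ω → X → X) (θ : Ω → Ω) (E : Set (Ω × X))
    (ε : ℝ) (n : ℕ) (ω : Ω) : ℕ :=
  sSup {m | ∃ F : Finset X, (F : Set X) ⊆ fiber E ω ∧ F.card = m ∧
    ∀ x ∈ F, ∀ y ∈ F, x ≠ y → 1 ≤ dBowen T θ ε n ω x y}

/-- `S'(ω,ε) = limsup_{n→∞} (1/n) log sep(ω,ε,n)`. -/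
noncomputable def Ssep (T : Ω → X → X) (θ : Ω → Ω) (E : Set (Ω × X))
    (ω : Ω) (ε : ℝ) : ℝ :=
  Filter.atTop.limsup (fun n : ℕ => Real.log (sepN T θ E ε n ω) / n)

/-- `S(ω,ε) = lim_{n→∞} (1/n) log cov(ω,ε,n)` (the limit exists by subadditivity and
equals the `limsup`). -/
noncomputable def Scov (T : Ω → X → X) (θ : Ω → Ω) (E : Set (Ω × X))
    (ω : Ω) (ε : ℝ) : ℝ :=
  Filter.atTop.limsup (fun n : ℕ => Real.log (covN T θ E ε n ω) / n)

/-- The fiberwise metric mean dimension computed from separated sets: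
`liminf_{1 > ε → 0⁺} S'(ω,ε)/(-log ε)`. -/
noncomputable def mdimMfibSep (T : Ω → X → X) (θ : Ω → Ω) (E : Set (Ω × X)) (ω : Ω) : ℝ :=
  Filter.liminf (fun ε => Ssep T θ E ω ε / (-Real.log ε)) (nhdsWithin 0 (Ioo (0:ℝ) 1))

/-- The fiberwise metric mean dimension `mdim_M(T,ω) = liminf_{1 > ε → 0⁺} S(ω,ε)/(-log ε)`. -/
noncomputable def mdimMfibCov (T : Ω → X → X) (θ : Ω → Ω) (E : Set (Ω × X)) (ω : Ω) : ℝ :=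
  Filter.liminf (fun ε => Scov T θ E ω ε / (-Real.log ε)) (nhdsWithin 0 (Ioo (0:ℝ) 1))

/-- The topological entropy `h_top(T) = ∫_Ω sup_{0<ε<1} S'(ω,ε) dP(ω)`. -/
noncomputable def htop (T : Ω → X → X) (θ : Ω → Ω) (E : Set (Ω × X))
    {mΩ : MeasurableSpace Ω} (P : Measure Ω) : ℝ≥0∞ :=
  ∫⁻ ω, ⨆ ε : Ioo (0:ℝ) 1, ENNReal.ofReal (Ssep T θ E ω (ε : ℝ)) ∂P

end Metric

section Mdim

variable [TopologicalSpace X] {mΩ : MeasurableSpace Ω}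

/-- The mean topological dimension with respect to the cover `U`:
`mdim(T,α) = lim_{n→∞} (1/n) ∫_Ω D(α_0^{n-1}(ω|E)) dP(ω)` (the limit exists by
subadditivity and equals the `liminf`). -/
noncomputable def mdimCov (P : Measure Ω) (T : Ω → X → X) (θ : Ω → Ω) (E : Set (Ω × X))
    {ι : Type*} [Fintype ι] (U : ι → Set X) : ℝ≥0∞ :=
  Filter.atTop.liminf (fun n : ℕ =>
    (∫⁻ ω, (DOn (fiber E ω) (dynCover T θ E U n ω) : ℝ≥0∞) ∂P) / (n : ℝ≥0∞))

/-- The mean topological dimension `mdim(T) = sup_α mdim(T,α)` over finite open covers. -/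
noncomputable def mdim (P : Measure Ω) (T : Ω → X → X) (θ : Ω → Ω)
    (E : Set (Ω × X)) : ℝ≥0∞ :=
  ⨆ (m : ℕ) (U : Fin m → Set X) (_ : IsOpenCover U), mdimCov P T θ E U

end Mdim

end Defs

theorem exists_isCompact_subset_range_of_lt {Z : Type*} [TopologicalSpace Z] [MeasurableSpace Z]
    (ν : Measure Z) [ν.OuterRegular] {g : (ℕ → ℕ) → Z} (hg : Continuous g)
    {c : ℝ≥0∞} (hc : c < ν (range g)) : ∃ K ⊆ range g, IsCompact K ∧ c ≤ ν K := by
  have step (k : ℕ) (Q : {Q : Set (ℕ → ℕ) // c < ν (g '' Q)}) :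
      ∃ m : ℕ, c < ν (g '' (Q.1 ∩ {σ | σ k ≤ m})) := by
    have hU : g '' Q.1 = ⋃ m : ℕ, g '' (Q.1 ∩ {σ | σ k ≤ m}) := by
      rw [← image_iUnion, ← inter_iUnion]
      congr 1
      ext σ
      simpa using fun _ => ⟨σ k, le_rfl⟩
    have hmono : Monotone fun m : ℕ => g '' (Q.1 ∩ {σ | σ k ≤ m}) := fun a b hab =>
      image_mono (inter_subset_inter_right _ fun σ (hσ : σ k ≤ a) => hσ.trans hab)
    have h := Q.2
    rw [hU, hmono.measure_iUnion] at h
    exact lt_iSup_iff.1 h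
  choose m hm using step
  let Q : ℕ → {Q : Set (ℕ → ℕ) // c < ν (g '' Q)} := fun n =>
    Nat.rec ⟨univ, by rwa [image_univ]⟩ (fun k Q => ⟨Q.1 ∩ {σ | σ k ≤ m k Q}, hm k Q⟩) n
  let b : ℕ → ℕ := fun k => m k (Q k)
  have hQ (k : ℕ) (σ : ℕ → ℕ) (hσ : σ ∈ (Q k).1) : ∀ i < k, σ i ≤ b i := by
    induction k with
    | zero => simp
    | succ k ih =>
      intro i hi
      rcases Nat.lt_succ_iff_lt_or_eq.1 hi with h | rfl
      · exact ih hσ.1 i h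
      · exact hσ.2
  have hKc : IsCompact (pi univ fun i => Iic (b i)) :=
    isCompact_univ_pi fun i => (finite_Iic (b i)).isCompact
  refine ⟨g '' pi univ fun i => Iic (b i), image_subset_range _ _, hKc.image hg, ?_⟩
  by_contra! hlt
  obtain ⟨U, hKU, hU, hUc⟩ := Set.exists_isOpen_lt_of_lt _ _ hlt
  have hne (k : ℕ) : ∃ σ ∈ (Q k).1, g σ ∉ U := by
    by_contra! h
    exact ((Q k).2.trans_le (measure_mono (image_subset_iff.2 h))).not_gt hUc
  choose σ hσQ hσU using hne
  have hτ (k : ℕ) : (fun i => min (σ k i) (b i)) ∈ pi univ fun i => Iic (b i) :=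
    fun i _ => mem_Iic.2 (min_le_right _ _)
  obtain ⟨τ, hτK, φ, hφ, hlim⟩ := hKc.tendsto_subseq hτ
  have hlim' : Tendsto (fun k => σ (φ k)) atTop (𝓝 τ) := by
    rw [tendsto_pi_nhds] at hlim ⊢
    intro i
    refine (hlim i).congr' ?_
    filter_upwards [eventually_gt_atTop i] with k hk
    exact min_eq_left (hQ _ _ (hσQ (φ k)) i (hk.trans_le (hφ.id_le k)))
  have hmem : ∀ᶠ k in atTop, g (σ (φ k)) ∈ U :=
    (hg.tendsto τ |>.comp hlim').eventually (hU.mem_nhds (hKU ⟨τ, hτK, rfl⟩))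
  obtain ⟨k, hk⟩ := hmem.exists
  exact hσU _ hk

theorem AnalyticSet.nullMeasurableSet {Z : Type*} [TopologicalSpace Z] [T2Space Z]
    [MeasurableSpace Z] [BorelSpace Z] (ν : Measure Z) [IsFiniteMeasure ν] [ν.OuterRegular]
    {A : Set Z} (hA : AnalyticSet A) : NullMeasurableSet A ν := by
  rw [AnalyticSet] at hA
  rcases hA with rfl | ⟨g, hg, rfl⟩
  · exact .empty
  rcases eq_or_ne (ν (range g)) 0 with h0 | h0
  · exact .of_null h0
  obtain ⟨c, -, hcA, hclim⟩ := exists_seq_strictMono_tendsto' (pos_iff_ne_zero.2 h0)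
  choose K hKA hKc hK using fun n =>
    exists_isCompact_subset_range_of_lt ν hg (hcA n).2
  have hsub : (⋃ n, K n) ⊆ range g := iUnion_subset hKA
  have hmeas : MeasurableSet (⋃ n, K n) := .iUnion fun n => (hKc n).measurableSet
  have hle : ν (range g) ≤ ν (⋃ n, K n) :=
    le_of_tendsto' hclim fun n => (hK n).trans (measure_mono (subset_iUnion K n))
  exact (hmeas.nullMeasurableSet).congr
    (ae_eq_of_subset_of_measure_ge hsub hle hmeas.nullMeasurableSet (measure_ne_top _ _))

theorem exists_measurable_preimage_prodMap {Ω X : Type*} [MeasurableSpace Ω] [MeasurableSpace X]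
    {S : Set (Ω × X)} (hS : MeasurableSet S) :
    ∃ (q : Ω → ℕ → Bool) (S₀ : Set ((ℕ → Bool) × X)), Measurable q ∧ MeasurableSet S₀ ∧
      S = Prod.map q id ⁻¹' S₀ := by
  classical
  rw [← generateFrom_prod] at hS
  induction hS with
  | basic S hS =>
    obtain ⟨A, hA, B, hB, rfl⟩ := hS
    refine ⟨fun ω _ => decide (ω ∈ A), {z | z 0 = true} ×ˢ B,
      measurable_pi_lambda _ fun _ => measurable_to_bool ?_,
      .prod (measurableSet_eq_fun (f := fun z : ℕ → Bool => z 0) (measurable_pi_apply 0)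
        measurable_const) hB, ?_⟩
    · convert! hA
      ext; simp
    · ext; simp
  | empty => exact ⟨fun _ _ => true, ∅, measurable_const, .empty, by simp⟩
  | compl S _ ih =>
    obtain ⟨q, S₀, hq, hS₀, rfl⟩ := ih
    exact ⟨q, S₀ᶜ, hq, hS₀.compl, rfl⟩
  | iUnion S _ ih =>
    choose q S₀ hq hS₀ hS using ih
    refine ⟨fun ω n => q n.unpair.1 ω n.unpair.2,
      ⋃ i, (Prod.map (fun z k => z (Nat.pair i k)) id) ⁻¹' S₀ i,
      measurable_pi_lambda _ fun n => (measurable_pi_apply _).comp (hq _),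
      .iUnion fun i => ?_ , ?_⟩
    · exact ((measurable_pi_lambda _ fun k => measurable_pi_apply _).prodMap
        measurable_id) (hS₀ i)
    · ext p
      simp [hS, Prod.map]

/-- The measurable projection theorem over a complete finite measure space. -/
theorem MeasurableSet.image_fst_of_isComplete {Ω X : Type*} [MeasurableSpace Ω] (P : Measure Ω)
    [IsFiniteMeasure P] [P.IsComplete] [TopologicalSpace X] [PolishSpace X] [MeasurableSpace X]
    [BorelSpace X] {S : Set (Ω × X)} (hS : MeasurableSet S) :
    MeasurableSet (Prod.fst '' S) := by
  obtain ⟨q, S₀, hq, hS₀, rfl⟩ := exists_measurable_preimage_prodMap hS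
  have hA : AnalyticSet (Prod.fst '' S₀) := hS₀.analyticSet_image measurable_fst
  have hnull := (AnalyticSet.nullMeasurableSet (P.map q) hA).preimage
    (hq.measurePreserving P).quasiMeasurePreserving
  convert! hnull.measurable_of_complete
  ext ω
  simp
theorem tsum_tsum_ofReal_sub {a : ℕ → ℕ → ℝ} (ha : ∀ n, Monotone fun k => a k n)
    (h0 : ∀ n, a 0 n = 0) :
    ∑' k, ∑' n, ENNReal.ofReal (a (k + 1) n - a k n) = ⨆ k, ∑' n, ENNReal.ofReal (a k n) := by
  rw [ENNReal.tsum_eq_iSup_nat]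
  refine iSup_congr fun K => ?_
  rw [← Summable.tsum_finsetSum fun _ _ => ENNReal.summable]
  refine tsum_congr fun n => ?_
  rw [← ENNReal.ofReal_sum_of_nonneg fun k _ => sub_nonneg.2 (ha n k.le_succ),
    Finset.sum_range_sub (fun k => a k n), h0, sub_zero]

section DaniellStone

variable {Y : Type*} (L : Subalgebra ℝ (Y → ℝ)) (Λ : (Y → ℝ) →ₗ[ℝ] ℝ)

/-- Sequences of nonnegative functions of `L` whose sum dominates the indicator of `S`. -/
def functionCover (S : Set Y) : Set (ℕ → Y → ℝ) :=
  {f | (∀ n, f n ∈ L ∧ 0 ≤ f n) ∧ ∀ y ∈ S, 1 ≤ ∑' n, ENNReal.ofReal (f n y)}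

theorem exists_functionCover_unpair {S : Set Y} {f : ℕ → ℕ → Y → ℝ}
    (hf : ∀ i n, f i n ∈ L ∧ 0 ≤ f i n)
    (hS : ∀ y ∈ S, 1 ≤ ∑' i, ∑' n, ENNReal.ofReal (f i n y)) :
    ∃ F ∈ functionCover L S,
      ∑' n, ENNReal.ofReal (Λ (F n)) = ∑' i, ∑' n, ENNReal.ofReal (Λ (f i n)) := by
  have key (φ : (Y → ℝ) → ℝ≥0∞) :
      ∑' n : ℕ, φ (f n.unpair.1 n.unpair.2) = ∑' i, ∑' n, φ (f i n) := by
    rw [← ENNReal.tsum_prod (f := fun i n => φ (f i n)),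
      ← Nat.pairEquiv.symm.tsum_eq fun p : ℕ × ℕ => φ (f p.1 p.2)]
    rfl
  refine ⟨fun n => f n.unpair.1 n.unpair.2, ⟨fun n => hf _ _, fun y hy => ?_⟩,
    key fun g => ENNReal.ofReal (Λ g)⟩
  rw [key fun g => ENNReal.ofReal (g y)]
  exact hS y hy

/-- The outer measure induced by a linear functional on an algebra of functions. -/
noncomputable def daniellOuterMeasure : OuterMeasure Y where
  measureOf S := ⨅ f ∈ functionCover L S, ∑' n, ENNReal.ofReal (Λ (f n))
  empty := by
    refine le_antisymm ?_ zero_le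
    refine iInf₂_le_of_le (fun _ => 0) ⟨fun _ => ⟨L.zero_mem, le_rfl⟩, by simp⟩ ?_
    simp
  mono h := iInf_mono fun f => iInf_mono' fun hf => ⟨⟨hf.1, fun y hy => hf.2 y (h hy)⟩, le_rfl⟩
  iUnion_nat S _ := by
    refine ENNReal.le_of_forall_pos_le_add fun ε hε hfin => ?_
    obtain ⟨δ, hδ, hδε⟩ := ENNReal.exists_pos_sum_of_countable (ENNReal.coe_pos.2 hε).ne' ℕ
    have hex (i : ℕ) : ∃ f ∈ functionCover L (S i), ∑' n, ENNReal.ofReal (Λ (f n)) <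
        (⨅ f ∈ functionCover L (S i), ∑' n, ENNReal.ofReal (Λ (f n))) + δ i := by
      have hlt := ENNReal.lt_add_right (ENNReal.ne_top_of_tsum_ne_top hfin.ne i)
        (ENNReal.coe_pos.2 (hδ i)).ne'
      simpa only [iInf_lt_iff, exists_prop] using! hlt
    choose f hfS hf using hex
    obtain ⟨F, hF, hsum⟩ := exists_functionCover_unpair L Λ (S := ⋃ i, S i)
      (fun i n => (hfS i).1 n) fun y hy => by
        obtain ⟨i, hi⟩ := mem_iUnion.1 hy
        exact ((hfS i).2 y hi).trans (ENNReal.le_tsum i)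
    refine (iInf₂_le F hF).trans (hsum.le.trans ?_)
    refine (ENNReal.tsum_le_tsum fun i => (hf i).le).trans ?_
    rw [ENNReal.tsum_add]
    gcongr

variable {L Λ}

theorem daniellOuterMeasure_le {S : Set Y} {f : ℕ → Y → ℝ} (hf : f ∈ functionCover L S) :
    daniellOuterMeasure L Λ S ≤ ∑' n, ENNReal.ofReal (Λ (f n)) :=
  iInf₂_le f hf

theorem map_le_map_of_nonneg (hpos : ∀ f ∈ L, 0 ≤ f → 0 ≤ Λ f) {f g : Y → ℝ} (hf : f ∈ L)
    (hg : g ∈ L) (h : f ≤ g) : Λ f ≤ Λ g := by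
  have := hpos (g - f) (L.sub_mem hg hf) (sub_nonneg.2 h)
  rwa [map_sub, sub_nonneg] at this

theorem daniellOuterMeasure_le_iSup (hpos : ∀ f ∈ L, 0 ≤ f → 0 ≤ Λ f) {S : Set Y}
    {u : ℕ → ℕ → Y → ℝ} (hu : ∀ k n, u k n ∈ L) (hmono : ∀ n, Monotone fun k => u k n)
    (h0 : ∀ n, u 0 n = 0) (hS : ∀ y ∈ S, 1 ≤ ⨆ k, ∑' n, ENNReal.ofReal (u k n y)) :
    daniellOuterMeasure L Λ S ≤ ⨆ k, ∑' n, ENNReal.ofReal (Λ (u k n)) := by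
  obtain ⟨F, hF, hsum⟩ := exists_functionCover_unpair L Λ (S := S)
    (f := fun k n => u (k + 1) n - u k n)
    (fun k n => ⟨L.sub_mem (hu _ _) (hu _ _), sub_nonneg.2 (hmono n k.le_succ)⟩) fun y hy => by
      simp only [Pi.sub_apply]
      rw [tsum_tsum_ofReal_sub (a := fun k n => u k n y) (fun n i j hij => hmono n hij y)
        fun n => by simp [h0]]
      exact hS y hy
  refine (daniellOuterMeasure_le hF).trans (hsum.le.trans ?_)
  simp only [map_sub]
  rw [tsum_tsum_ofReal_sub (a := fun k n => Λ (u k n))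
    (fun n i j hij => map_le_map_of_nonneg hpos (hu _ _) (hu _ _) (hmono n hij))
    fun n => by simp [h0]]

theorem min_one_nsmul_mem (hsup : ∀ f ∈ L, f ⊔ 0 ∈ L) {g : Y → ℝ} (hg : g ∈ L) (k : ℕ) :
    (fun y => min 1 (k * g y)) ∈ L := by
  have h : (fun y => min 1 (k * g y)) = 1 - (1 - (k : ℝ) • g) ⊔ 0 := by
    ext y
    simp only [Pi.sub_apply, Pi.one_apply, Pi.sup_apply, Pi.smul_apply, smul_eq_mul,
      Pi.zero_apply]
    rcases le_total 1 (k * g y) with h | h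
    · rw [min_eq_left h, sup_eq_right.2 (by linarith), sub_zero]
    · rw [min_eq_right h, sup_eq_left.2 (by linarith), sub_sub_cancel]
  rw [h]
  exact L.sub_mem L.one_mem (hsup _ (L.sub_mem L.one_mem (L.smul_mem hg _)))

theorem monotone_min_one_nsmul {g : Y → ℝ} (h0 : 0 ≤ g) :
    Monotone fun (k : ℕ) y => min 1 (k * g y) := fun _ _ hij y =>
  min_le_min_left _ (mul_le_mul_of_nonneg_right (Nat.cast_le.2 hij) (h0 y))

theorem exists_min_one_nsmul_eq_one {a : ℝ} (ha : 0 < a) : ∃ k : ℕ, min 1 (k * a) = 1 := by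
  obtain ⟨k, hk⟩ := exists_nat_ge a⁻¹
  refine ⟨k, min_eq_left ?_⟩
  calc (1 : ℝ) = a⁻¹ * a := (inv_mul_cancel₀ ha.ne').symm
    _ ≤ k * a := by gcongr

theorem isCaratheodory_daniellOuterMeasure (hsup : ∀ f ∈ L, f ⊔ 0 ∈ L)
    (hpos : ∀ f ∈ L, 0 ≤ f → 0 ≤ Λ f) {g : Y → ℝ} (hg : g ∈ L) (hg0 : 0 ≤ g) :
    (daniellOuterMeasure L Λ).IsCaratheodory {y | 0 < g y} := by
  rw [OuterMeasure.isCaratheodory_iff_le']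
  intro T
  refine le_iInf₂ fun f hf => ?_
  let t : ℕ → Y → ℝ := fun k y => min 1 (k * g y)
  have htL (k : ℕ) : t k ∈ L := min_one_nsmul_mem hsup hg k
  have ht1 (k : ℕ) : t k ≤ 1 := fun y => min_le_left _ _
  have ht0 (k : ℕ) : 0 ≤ t k := fun y =>
    le_min zero_le_one (mul_nonneg (Nat.cast_nonneg _) (hg0 y))
  have hin : daniellOuterMeasure L Λ (T ∩ {y | 0 < g y}) ≤
      ⨆ k, ∑' n, ENNReal.ofReal (Λ (f n * t k)) := by
    refine daniellOuterMeasure_le_iSup hpos (fun k n => L.mul_mem (hf.1 n).1 (htL k))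
      (fun n _ _ hij y => mul_le_mul_of_nonneg_left (monotone_min_one_nsmul hg0 hij y)
        ((hf.1 n).2 y)) (fun n => by ext y; simp [t]) fun y hy => ?_
    obtain ⟨k, hk⟩ := exists_min_one_nsmul_eq_one hy.2
    refine (hf.2 y hy.1).trans (le_iSup_of_le k (le_of_eq ?_))
    simp [t, hk]
  have hout (k : ℕ) : daniellOuterMeasure L Λ (T \ {y | 0 < g y}) ≤
      ∑' n, ENNReal.ofReal (Λ (f n * (1 - t k))) := by
    refine daniellOuterMeasure_le ⟨fun n => ⟨L.mul_mem (hf.1 n).1 (L.sub_mem L.one_mem (htL k)),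
      mul_nonneg (hf.1 n).2 (sub_nonneg.2 (ht1 k))⟩, fun y hy => ?_⟩
    have hy0 : g y = 0 := le_antisymm (not_lt.1 hy.2) (hg0 y)
    simpa [t, hy0] using! hf.2 y hy.1
  refine (add_le_add_left hin _).trans ?_
  rw [ENNReal.iSup_add]
  refine iSup_le fun k => (add_le_add_right (hout k) _).trans (le_of_eq ?_)
  rw [← ENNReal.tsum_add]
  refine tsum_congr fun n => ?_
  rw [← ENNReal.ofReal_add (hpos _ (L.mul_mem (hf.1 n).1 (htL k))
      (mul_nonneg (hf.1 n).2 (ht0 k)))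
    (hpos _ (L.mul_mem (hf.1 n).1 (L.sub_mem L.one_mem (htL k)))
      (mul_nonneg (hf.1 n).2 (sub_nonneg.2 (ht1 k)))), ← map_add]
  congr 2
  ring

theorem ofReal_le_tsum_of_mem_functionCover (hsup : ∀ f ∈ L, f ⊔ 0 ∈ L)
    (hpos : ∀ f ∈ L, 0 ≤ f → 0 ≤ Λ f)
    (hcont : ∀ f : ℕ → Y → ℝ, (∀ n, f n ∈ L) → Antitone f →
      (∀ y, Tendsto (fun n => f n y) atTop (𝓝 0)) → Tendsto (fun n => Λ (f n)) atTop (𝓝 0))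
    {S : Set Y} {t : Y → ℝ} (ht : t ∈ L) (ht1 : t ≤ 1) (htS : ∀ y ∉ S, t y ≤ 0)
    {f : ℕ → Y → ℝ} (hf : f ∈ functionCover L S) :
    ENNReal.ofReal (Λ t) ≤ ∑' n, ENNReal.ofReal (Λ (f n)) := by
  let F : ℕ → Y → ℝ := fun N => (t - ∑ n ∈ Finset.range N, f n) ⊔ 0
  have hsumL (N : ℕ) : ∑ n ∈ Finset.range N, f n ∈ L := L.sum_mem fun n _ => (hf.1 n).1
  have hFL (N : ℕ) : F N ∈ L := hsup _ (L.sub_mem ht (hsumL N))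
  have hsmono : Monotone fun N => ∑ n ∈ Finset.range N, f n :=
    monotone_nat_of_le_succ fun N => by
      rw [Finset.sum_range_succ]
      exact le_add_of_nonneg_right (hf.1 N).2
  have hanti : Antitone F := fun i j hij => sup_le_sup_right (sub_le_sub_left (hsmono hij) _) _
  have hlim (y : Y) : Tendsto (fun N => F N y) atTop (𝓝 0) := by
    have hF0 (N : ℕ) : 0 ≤ F N y := le_sup_right
    by_cases hy : y ∈ S
    · rw [tendsto_order]
      refine ⟨fun a ha => .of_forall fun N => ha.trans_le (hF0 N), fun a ha => ?_⟩
      have h1 : ENNReal.ofReal (1 - a) < ∑' n, ENNReal.ofReal (f n y) :=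
        (ENNReal.ofReal_lt_one.2 (by linarith)).trans_le (hf.2 y hy)
      rw [ENNReal.tsum_eq_iSup_nat] at h1
      obtain ⟨N, hN⟩ := lt_iSup_iff.1 h1
      filter_upwards [eventually_ge_atTop N] with M hM
      refine (hanti hM y).trans_lt ?_
      rw [← ENNReal.ofReal_sum_of_nonneg fun n _ => (hf.1 n).2 y] at hN
      have hN' := lt_of_not_ge fun h => (ENNReal.ofReal_le_ofReal h).not_gt hN
      have := ht1 y
      simp only [Pi.one_apply] at this
      simp only [F, Pi.sup_apply, Pi.sub_apply, Finset.sum_apply, Pi.zero_apply, sup_lt_iff]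
      exact ⟨by linarith, ha⟩
    · refine tendsto_const_nhds.congr fun N => le_antisymm (hF0 N) (sup_le ?_ le_rfl)
      have h0 : 0 ≤ (∑ n ∈ Finset.range N, f n) y := by
        rw [Finset.sum_apply]
        exact Finset.sum_nonneg fun n _ => (hf.1 n).2 y
      simp only [Pi.sub_apply]
      linarith [htS y hy]
  have hle (N : ℕ) : ENNReal.ofReal (Λ t) ≤
      ENNReal.ofReal (Λ (F N)) + ∑' n, ENNReal.ofReal (Λ (f n)) := by
    have h1 : Λ t ≤ Λ (F N) + ∑ n ∈ Finset.range N, Λ (f n) := by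
      rw [← map_sum, ← map_add]
      refine map_le_map_of_nonneg hpos ht (L.add_mem (hFL N) (hsumL N)) ?_
      rw [← sub_le_iff_le_add]
      exact le_sup_left
    refine (ENNReal.ofReal_le_ofReal h1).trans (ENNReal.ofReal_add_le.trans ?_)
    gcongr
    rw [ENNReal.ofReal_sum_of_nonneg fun n _ => hpos _ (hf.1 n).1 (hf.1 n).2]
    exact ENNReal.sum_le_tsum _
  have hT : Tendsto (fun N => ENNReal.ofReal (Λ (F N)) + ∑' n, ENNReal.ofReal (Λ (f n))) atTop
      (𝓝 (ENNReal.ofReal 0 + ∑' n, ENNReal.ofReal (Λ (f n)))) :=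
    (ENNReal.tendsto_ofReal (hcont F hFL hanti hlim)).add_const _
  simpa using ge_of_tendsto' hT hle

/-- A form of the Daniell–Stone representation theorem. -/
theorem exists_measure_tendsto_of_positive_functional [MeasurableSpace Y]
    (hsup : ∀ f ∈ L, f ⊔ 0 ∈ L) (hmeas : ∀ f ∈ L, Measurable f)
    (hgen : ‹MeasurableSpace Y› ≤
      MeasurableSpace.generateFrom {S | ∃ g ∈ L, 0 ≤ g ∧ {y | 0 < g y} = S})
    (hpos : ∀ f ∈ L, 0 ≤ f → 0 ≤ Λ f)
    (hcont : ∀ f : ℕ → Y → ℝ, (∀ n, f n ∈ L) → Antitone f →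
      (∀ y, Tendsto (fun n => f n y) atTop (𝓝 0)) → Tendsto (fun n => Λ (f n)) atTop (𝓝 0)) :
    ∃ μ : Measure Y, ∀ g ∈ L, 0 ≤ g →
      Tendsto (fun k : ℕ => ENNReal.ofReal (Λ fun y => min 1 (k * g y))) atTop
        (𝓝 (μ {y | 0 < g y})) := by
  have hcar : ‹MeasurableSpace Y› ≤ (daniellOuterMeasure L Λ).caratheodory :=
    hgen.trans <| MeasurableSpace.generateFrom_le fun S ⟨g, hg, hg0, hS⟩ =>
      hS ▸ isCaratheodory_daniellOuterMeasure hsup hpos hg hg0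
  refine ⟨(daniellOuterMeasure L Λ).toMeasure hcar, fun g hg hg0 => ?_⟩
  rw [toMeasure_apply _ _ (measurableSet_lt measurable_const (hmeas g hg))]
  let t : ℕ → Y → ℝ := fun k y => min 1 (k * g y)
  have htL (k : ℕ) : t k ∈ L := min_one_nsmul_mem hsup hg k
  have hmono : Monotone t := monotone_min_one_nsmul hg0
  have heq : daniellOuterMeasure L Λ {y | 0 < g y} = ⨆ k, ENNReal.ofReal (Λ (t k)) := by
    refine le_antisymm ?_ (iSup_le fun k => le_iInf₂ fun f hf => ?_)
    · have h := daniellOuterMeasure_le_iSup (Λ := Λ) hpos (S := {y | 0 < g y})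
        (u := fun k n => if n = 0 then t k else 0)
        (fun k n => by split_ifs; exacts [htL k, L.zero_mem])
        (fun n i j hij => by dsimp only; split_ifs; exacts [hmono hij, le_rfl])
        (fun n => by ext y; split_ifs <;> simp [t]) fun y hy => by
          obtain ⟨k, hk⟩ := exists_min_one_nsmul_eq_one hy
          refine le_iSup_of_le k ?_
          refine le_trans (le_of_eq ?_) (ENNReal.le_tsum 0)
          simp [t, hk]
      refine h.trans (iSup_mono fun k => le_of_eq ?_)
      rw [tsum_eq_single 0 fun n hn => by simp [hn]]
      simp
    · refine ofReal_le_tsum_of_mem_functionCover hsup hpos hcont (htL k)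
        (fun y => min_le_left _ _) (fun y hy => ?_) hf
      have hy0 : g y = 0 := le_antisymm (not_lt.1 hy) (hg0 y)
      simp [t, hy0]
  rw [heq]
  exact tendsto_atTop_iSup fun i j hij =>
    ENNReal.ofReal_le_ofReal (map_le_map_of_nonneg hpos (htL i) (htL j) (hmono hij))

end DaniellStone

section Maximal

variable {Ω : Type*}

/-- The running maximum `max_{0 ≤ k ≤ n} birkhoffSum θ g k`. -/
noncomputable def maxBirkhoffSum (θ : Ω → Ω) (g : Ω → ℝ) : ℕ → Ω → ℝ
  | 0, _ => 0
  | n + 1, ω => max 0 (g ω + maxBirkhoffSum θ g n (θ ω))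

theorem maxBirkhoffSum_nonneg (θ : Ω → Ω) (g : Ω → ℝ) (n : ℕ) (ω : Ω) :
    0 ≤ maxBirkhoffSum θ g n ω := by
  cases n
  · exact le_rfl
  · exact le_max_left _ _

theorem maxBirkhoffSum_le_succ (θ : Ω → Ω) (g : Ω → ℝ) (n : ℕ) (ω : Ω) :
    maxBirkhoffSum θ g n ω ≤ maxBirkhoffSum θ g (n + 1) ω := by
  induction n generalizing ω with
  | zero => exact maxBirkhoffSum_nonneg _ _ _ _
  | succ n ih => exact max_le_max le_rfl (add_le_add_right (ih _) _)

theorem birkhoffSum_le_maxBirkhoffSum (θ : Ω → Ω) (g : Ω → ℝ) (n : ℕ) (ω : Ω) :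
    birkhoffSum θ g n ω ≤ maxBirkhoffSum θ g n ω := by
  induction n generalizing ω with
  | zero => exact le_rfl
  | succ n ih =>
    rw [birkhoffSum_succ']
    exact le_max_of_le_right (add_le_add_right (ih _) _)

theorem exists_maxBirkhoffSum_eq (θ : Ω → Ω) (g : Ω → ℝ) (n : ℕ) (ω : Ω) :
    ∃ k, maxBirkhoffSum θ g n ω = birkhoffSum θ g k ω := by
  induction n generalizing ω with
  | zero => exact ⟨0, rfl⟩
  | succ n ih =>
    obtain ⟨k, hk⟩ := ih (θ ω)
    rcases max_choice 0 (g ω + maxBirkhoffSum θ g n (θ ω)) with h | h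
    · exact ⟨0, h⟩
    · exact ⟨k + 1, by rw [birkhoffSum_succ', ← hk]; exact h⟩

variable [MeasurableSpace Ω] {P : Measure Ω} {θ : Ω → Ω}

theorem measurable_maxBirkhoffSum (hθ : Measurable θ) {g : Ω → ℝ} (hg : Measurable g) (n : ℕ) :
    Measurable (maxBirkhoffSum θ g n) := by
  induction n with
  | zero => exact measurable_const
  | succ n ih => exact measurable_const.max (hg.add (ih.comp hθ))

theorem integrable_maxBirkhoffSum (hθ : MeasurePreserving θ P P) {g : Ω → ℝ}
    (hg : Integrable g P) (n : ℕ) : Integrable (maxBirkhoffSum θ g n) P := by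
  induction n with
  | zero => exact integrable_zero _ _ _
  | succ n ih => exact (integrable_zero _ _ _).sup (hg.add (hθ.integrable_comp_of_integrable ih))

theorem integral_comp_of_measurePreserving (hθ : MeasurePreserving θ P P) {g : Ω → ℝ}
    (hg : Measurable g) : ∫ ω, g (θ ω) ∂P = ∫ ω, g ω ∂P := by
  conv_rhs => rw [← hθ.map_eq]
  exact (integral_map hθ.aemeasurable hg.aestronglyMeasurable).symm

theorem integrable_birkhoffSum (hθ : MeasurePreserving θ P P) {h : Ω → ℝ}
    (hi : Integrable h P) (n : ℕ) : Integrable (birkhoffSum θ h n) P :=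
  integrable_finsetSum _ fun k _ => (hθ.iterate k).integrable_comp_of_integrable hi

theorem integral_birkhoffSum (hθ : MeasurePreserving θ P P) {h : Ω → ℝ} (hm : Measurable h)
    (hi : Integrable h P) (n : ℕ) : ∫ ω, birkhoffSum θ h n ω ∂P = n * ∫ ω, h ω ∂P := by
  simp only [birkhoffSum]
  rw [integral_finsetSum (f := fun k ω => h (θ^[k] ω)) _ fun k _ =>
    (hθ.iterate k).integrable_comp_of_integrable hi]
  simp [integral_comp_of_measurePreserving (hθ.iterate _) hm]

variable [IsProbabilityMeasure P]

/-- The maximal ergodic inequality for nonnegative functions. -/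
theorem mul_measure_exists_lt_birkhoffSum_le (hθ : MeasurePreserving θ P P) {h : Ω → ℝ}
    (hm : Measurable h) (hi : Integrable h P) (h0 : 0 ≤ h) {c : ℝ} (hc : 0 < c) :
    ENNReal.ofReal c * P {ω | ∃ n : ℕ, c * n < birkhoffSum θ h n ω} ≤
      ENNReal.ofReal (∫ ω, h ω ∂P) := by
  let g : Ω → ℝ := fun ω => h ω - c
  have hgm : Measurable g := hm.sub measurable_const
  have hgi : Integrable g P := hi.sub (integrable_const c)
  have hM := measurable_maxBirkhoffSum hθ.measurable hgm
  have hMi := integrable_maxBirkhoffSum hθ hgi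
  let A : ℕ → Set Ω := fun n => {ω | 0 < maxBirkhoffSum θ g (n + 1) ω}
  have hAm (n : ℕ) : MeasurableSet (A n) := measurableSet_lt measurable_const (hM _)
  have hAmono : Monotone A := monotone_nat_of_le_succ fun n ω (hω : 0 < _) =>
    hω.trans_le (maxBirkhoffSum_le_succ θ g (n + 1) ω)
  have hsum (n : ℕ) (ω : Ω) : birkhoffSum θ g n ω = birkhoffSum θ h n ω - c * n := by
    simp [birkhoffSum, g, Finset.sum_sub_distrib, mul_comm]
  have hsub : {ω | ∃ n : ℕ, c * n < birkhoffSum θ h n ω} ⊆ ⋃ n, A n := fun ω ⟨n, hn⟩ =>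
    mem_iUnion.2 ⟨n, ((sub_pos.2 hn).trans_eq (hsum n ω).symm).trans_le
      ((birkhoffSum_le_maxBirkhoffSum θ g n ω).trans (maxBirkhoffSum_le_succ θ g n ω))⟩
  have hA (n : ℕ) : ENNReal.ofReal c * P (A n) ≤ ENNReal.ofReal (∫ ω, h ω ∂P) := by
    have hpt (ω : Ω) : maxBirkhoffSum θ g (n + 1) ω - maxBirkhoffSum θ g n (θ ω) ≤
        h ω - (A n).indicator (fun _ => c) ω := by
      by_cases hω : ω ∈ A n
      · rw [indicator_of_mem hω]
        have h1 : maxBirkhoffSum θ g (n + 1) ω = g ω + maxBirkhoffSum θ g n (θ ω) :=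
          max_eq_right (le_of_lt ((lt_max_iff.1 hω).resolve_left (lt_irrefl _)))
        rw [h1, add_sub_cancel_right]
      · rw [indicator_of_notMem hω]
        have h1 : maxBirkhoffSum θ g (n + 1) ω ≤ 0 := not_lt.1 hω
        linarith [h0 ω, maxBirkhoffSum_nonneg θ g n (θ ω), show (0 : ℝ) ≤ h ω from h0 ω]
    have hcomp : Integrable (fun ω => maxBirkhoffSum θ g n (θ ω)) P :=
      hθ.integrable_comp_of_integrable (hMi n)
    have hind : Integrable ((A n).indicator fun _ => c) P := (integrable_const c).indicator (hAm n)
    have hint := integral_mono ((hMi (n + 1)).sub hcomp) (hi.sub hind) hpt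
    simp only [Pi.sub_apply] at hint
    rw [integral_sub (hMi (n + 1)) hcomp, integral_sub hi hind,
      integral_comp_of_measurePreserving hθ (hM n),
        integral_indicator_const _ (hAm n), smul_eq_mul] at hint
    have hle := integral_mono (hMi n) (hMi (n + 1)) (maxBirkhoffSum_le_succ θ g n)
    rw [← ofReal_measureReal (μ := P) (s := A n), ← ENNReal.ofReal_mul hc.le]
    exact ENNReal.ofReal_le_ofReal (by linarith)
  refine (mul_le_mul_right (measure_mono hsub) _).trans ?_
  rw [hAmono.measure_iUnion, ENNReal.mul_iSup]
  exact iSup_le hA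

/-- A function whose Birkhoff sums are bounded below is, up to a bounded coboundary and a small
error in the integral, nonnegative. -/
theorem exists_nonneg_birkhoffSum_le (hθ : MeasurePreserving θ P P) {h : Ω → ℝ}
    (hm : Measurable h) (hi : Integrable h P) {B : ℝ}
    (hB : ∀ᵐ ω ∂P, ∀ n, -B ≤ birkhoffSum θ h n ω) {ε : ℝ} (hε : 0 < ε) :
    ∃ h' : Ω → ℝ, Measurable h' ∧ Integrable h' P ∧ 0 ≤ h' ∧
      ∫ ω, h' ω ∂P ≤ ∫ ω, h ω ∂P + ε ∧
      ∀ᵐ ω ∂P, ∀ n, birkhoffSum θ h n ω ≤ birkhoffSum θ h' n ω + B := by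
  let g : Ω → ℝ := fun ω => -h ω
  have hM := measurable_maxBirkhoffSum hθ.measurable (g := g) hm.neg
  have hMi := integrable_maxBirkhoffSum hθ (g := g) hi.neg
  have hsum (n : ℕ) (ω : Ω) : birkhoffSum θ g n ω = -birkhoffSum θ h n ω := by
    simp [birkhoffSum, g]
  have hMB : ∀ᵐ ω ∂P, ∀ n, maxBirkhoffSum θ g n ω ≤ B := by
    filter_upwards [hB] with ω hω n
    obtain ⟨k, hk⟩ := exists_maxBirkhoffSum_eq θ g n ω
    rw [hk, hsum]
    linarith [hω k]
  let I : ℕ → ℝ := fun n => ∫ ω, maxBirkhoffSum θ g n ω ∂P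
  have hImono : Monotone I := monotone_nat_of_le_succ fun n =>
    integral_mono (hMi n) (hMi (n + 1)) (maxBirkhoffSum_le_succ θ g n)
  have hIB (n : ℕ) : I n ≤ B := by
    have := integral_mono_ae (hMi n) (integrable_const B) (hMB.mono fun ω hω => hω n)
    simpa using this
  obtain ⟨N, hN⟩ : ∃ N, I (N + 1) < I N + ε := by
    have hlim := tendsto_atTop_ciSup hImono ⟨B, forall_mem_range.2 hIB⟩
    have h0 := ((tendsto_add_atTop_iff_nat 1).2 hlim).sub hlim
    rw [sub_self] at h0
    obtain ⟨N, hN⟩ := (h0.eventually (gt_mem_nhds hε)).exists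
    exact ⟨N, by linarith⟩
  have hcomp : Integrable (fun ω => maxBirkhoffSum θ g N (θ ω)) P :=
    hθ.integrable_comp_of_integrable (hMi N)
  refine ⟨fun ω => h ω + maxBirkhoffSum θ g (N + 1) ω - maxBirkhoffSum θ g N (θ ω),
    (hm.add (hM _)).sub ((hM _).comp hθ.measurable), (hi.add (hMi _)).sub hcomp,
    fun ω => ?_, ?_, ?_⟩
  · have : -h ω + maxBirkhoffSum θ g N (θ ω) ≤ maxBirkhoffSum θ g (N + 1) ω := le_max_right _ _
    simp only [Pi.zero_apply]
    linarith
  · rw [integral_sub (f := fun ω => h ω + maxBirkhoffSum θ g (N + 1) ω) (hi.add (hMi _)) hcomp,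
      integral_add hi (hMi _), integral_comp_of_measurePreserving hθ (hM N)]
    linarith
  · have hit : ∀ᵐ ω ∂P, ∀ n, maxBirkhoffSum θ g N (θ^[n] ω) ≤ B :=
      ae_all_iff.2 fun n => (hθ.iterate n).quasiMeasurePreserving.ae (hMB.mono fun ω hω => hω N)
    filter_upwards [hit] with ω hω n
    have hle : birkhoffSum θ h n ω ≤
        birkhoffSum θ (fun ω => h ω + maxBirkhoffSum θ g (N + 1) ω -
          maxBirkhoffSum θ g N (θ ω)) n ω +
        (maxBirkhoffSum θ g N (θ^[n] ω) - maxBirkhoffSum θ g N ω) := by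
      clear hω
      induction n with
      | zero => simp
      | succ n ih =>
        rw [birkhoffSum_succ, birkhoffSum_succ, Function.iterate_succ_apply']
        linarith [maxBirkhoffSum_le_succ θ g N (θ^[n] ω)]
    linarith [hω n, maxBirkhoffSum_nonneg θ g N ω]

theorem ae_tendsto_div_of_le_birkhoffSum (hθ : MeasurePreserving θ P P) {b : ℕ → Ω → ℝ}
    (hb0 : ∀ n ω, 0 ≤ b n ω)
    (hb : ∀ ε > 0, ∃ (h : Ω → ℝ) (B : ℝ), Measurable h ∧ Integrable h P ∧ ∫ ω, h ω ∂P < ε ∧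
      ∀ᵐ ω ∂P, ∀ n, b n ω ≤ birkhoffSum θ h n ω + B) :
    ∀ᵐ ω ∂P, Tendsto (fun n : ℕ => b n ω / n) atTop (𝓝 0) := by
  have key (c : ℝ) (hc : 0 < c) : ∀ᵐ ω ∂P, ∃ B : ℝ, ∀ n : ℕ, b n ω ≤ c * n + B := by
    rw [ae_iff]
    have hc' : ENNReal.ofReal c ≠ 0 := (ENNReal.ofReal_pos.2 hc).ne'
    suffices ENNReal.ofReal c * P {ω | ¬∃ B : ℝ, ∀ n : ℕ, b n ω ≤ c * n + B} = 0 from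
      (mul_eq_zero.1 this).resolve_left hc'
    refine le_antisymm (ENNReal.le_of_forall_pos_le_add fun ε hε _ => ?_) zero_le
    rw [zero_add]
    obtain ⟨h, B, hm, hi, hint, hle⟩ := hb (ε / 2) (half_pos hε)
    obtain ⟨h', hm', hi', h0', hint', hle'⟩ := exists_nonneg_birkhoffSum_le hθ hm hi (B := B)
      (hle.mono fun ω hω n => by linarith [hω n, hb0 n ω]) (ε := ε / 2) (half_pos hε)
    have hsub : ({ω | ¬∃ B : ℝ, ∀ n : ℕ, b n ω ≤ c * n + B} : Set Ω) ≤ᵐ[P]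
        {ω | ∃ n : ℕ, c * n < birkhoffSum θ h' n ω} := by
      filter_upwards [hle, hle'] with ω hω hω' hnot
      by_contra hcon
      refine hnot ⟨B + B, fun n => ?_⟩
      have : birkhoffSum θ h' n ω ≤ c * n := not_lt.1 fun h => hcon ⟨n, h⟩
      linarith [hω n, hω' n]
    calc ENNReal.ofReal c * P {ω | ¬∃ B : ℝ, ∀ n : ℕ, b n ω ≤ c * n + B}
        ≤ ENNReal.ofReal c * P {ω | ∃ n : ℕ, c * n < birkhoffSum θ h' n ω} := by
          exact mul_le_mul_right (measure_mono_ae hsub) _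
      _ ≤ ENNReal.ofReal (∫ ω, h' ω ∂P) := mul_measure_exists_lt_birkhoffSum_le hθ hm' hi' h0' hc
      _ ≤ ENNReal.ofReal ε := ENNReal.ofReal_le_ofReal (by linarith)
      _ = ε := ENNReal.ofReal_coe_nnreal
  have hall : ∀ᵐ ω ∂P, ∀ m : ℕ, ∃ B : ℝ, ∀ n : ℕ, b n ω ≤ 1 / (m + 1 : ℝ) * n + B :=
    ae_all_iff.2 fun m => key _ Nat.one_div_pos_of_nat
  filter_upwards [hall] with ω hω
  rw [tendsto_order]
  refine ⟨fun a ha => .of_forall fun n => ha.trans_le (div_nonneg (hb0 n ω) n.cast_nonneg),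
    fun a ha => ?_⟩
  obtain ⟨m, hm⟩ := exists_nat_one_div_lt ha
  obtain ⟨B, hB⟩ := hω m
  have hlim : Tendsto (fun n : ℕ => 1 / (m + 1 : ℝ) + B / n) atTop (𝓝 (1 / (m + 1 : ℝ) + 0)) :=
    tendsto_const_nhds.add (tendsto_const_div_atTop_nhds_zero_nat B)
  rw [add_zero] at hlim
  filter_upwards [hlim.eventually (gt_mem_nhds hm), eventually_gt_atTop 0] with n hn hn0
  have hn0' : (0 : ℝ) < n := Nat.cast_pos.2 hn0
  refine lt_of_le_of_lt ?_ hn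
  rw [div_le_iff₀ hn0', add_mul, div_mul_cancel₀ _ hn0'.ne']
  exact hB n

end Maximal

theorem exists_linearMap_le_of_convexCone {V : Type*} [AddCommGroup V] [Module ℝ V]
    (R : V → Set ℝ) (hadd : ∀ x y, ∀ a ∈ R x, ∀ b ∈ R y, a + b ∈ R (x + y))
    (hsmul : ∀ x, ∀ a ∈ R x, ∀ t : ℝ, 0 < t → t * a ∈ R (t • x))
    (hne : ∀ x, (R x).Nonempty) (hbdd : ∀ x, BddBelow (R x)) (x₀ : V) {c₀ : ℝ}
    (hc₀ : ∀ a ∈ R x₀, c₀ ≤ a) :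
    ∃ Λ : V →ₗ[ℝ] ℝ, (∀ x, ∀ a ∈ R x, Λ x ≤ a) ∧ c₀ ≤ Λ x₀ := by
  let N : V → ℝ := fun x => sInf (R x)
  have hNle (x : V) (t : ℝ) (ht : 0 < t) : N (t • x) ≤ t * N x := by
    rw [← div_le_iff₀' ht]
    refine le_csInf (hne x) fun a ha => ?_
    rw [div_le_iff₀' ht]
    exact csInf_le (hbdd _) (hsmul x a ha t ht)
  have hNhom (t : ℝ) (ht : 0 < t) (x : V) : N (t • x) = t * N x := by
    refine le_antisymm (hNle x t ht) ?_
    have h := hNle (t • x) t⁻¹ (inv_pos.2 ht)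
    rwa [inv_smul_smul₀ ht.ne', le_inv_mul_iff₀ ht] at h
  have hNadd (x y : V) : N (x + y) ≤ N x + N y := by
    rw [← sub_le_iff_le_add]
    refine le_csInf (hne x) fun a ha => ?_
    rw [sub_le_comm]
    refine le_csInf (hne y) fun b hb => ?_
    rw [sub_le_iff_le_add']
    exact csInf_le (hbdd _) (hadd x y a ha b hb)
  have hN0 : N 0 = 0 := by
    have := hNhom 2 two_pos 0
    rw [smul_zero] at this
    linarith
  have hc₀' : c₀ ≤ N x₀ := le_csInf (hne x₀) hc₀
  suffices ∃ Λ : V →ₗ[ℝ] ℝ, Λ x₀ = N x₀ ∧ ∀ x, Λ x ≤ N x by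
    obtain ⟨Λ, h0, h⟩ := this
    exact ⟨Λ, fun x a ha => (h x).trans (csInf_le (hbdd x) ha), hc₀'.trans h0.ge⟩
  rcases eq_or_ne x₀ 0 with rfl | hx₀
  · obtain ⟨Λ, -, hΛ⟩ := exists_extension_of_le_sublinear (⊥ : V →ₗ.[ℝ] ℝ) N hNhom hNadd
      (by rintro ⟨x, hx⟩
          obtain rfl : x = 0 := hx
          exact (LinearPMap.map_zero _).trans hN0.symm |>.le)
    exact ⟨Λ, by rw [map_zero, hN0], hΛ⟩
  · obtain ⟨Λ, hΛ₀, hΛ⟩ := exists_extension_of_le_sublinear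
      (LinearPMap.mkSpanSingleton x₀ (N x₀) hx₀) N hNhom hNadd (by
        rintro ⟨x, hx⟩
        obtain ⟨t, rfl⟩ := Submodule.mem_span_singleton.1 hx
        rw [LinearPMap.mkSpanSingleton'_apply, RingHom.id_apply, smul_eq_mul]
        rcases lt_trichotomy t 0 with ht | rfl | ht
        · have h1 := hNadd (t • x₀) ((-t) • x₀)
          rw [← add_smul, add_neg_cancel, zero_smul, hN0, hNhom (-t) (neg_pos.2 ht)] at h1
          dsimp only
          linarith
        · simp [hN0]
        · exact (hNhom t ht x₀).ge)
    refine ⟨Λ, ?_, hΛ⟩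
    have := hΛ₀ ⟨x₀, Submodule.mem_span_singleton_self x₀⟩
    rw [this]
    exact LinearPMap.mkSpanSingleton_apply ℝ ℝ hx₀ _

section BundleRDS

variable {Ω X : Type*}

/-- The skew product `(ω, x) ↦ (θ ω, T_ω x)`. -/
def skewProduct (θ : Ω → Ω) (T : Ω → X → X) (p : Ω × X) : Ω × X := (θ p.1, T p.1 p.2)

theorem skewProduct_iterate (θ : Ω → Ω) (T : Ω → X → X) (n : ℕ) (ω : Ω) (x : X) :
    (skewProduct θ T)^[n] (ω, x) = (θ^[n] ω, itr T θ n ω x) := by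
  induction n generalizing ω x with
  | zero => rfl
  | succ n ih => exact ih (θ ω) (T ω x)

theorem orbCount_eq_birkhoffSum (θ : Ω → Ω) (T : Ω → X → X) (A : Set X) (n : ℕ) (ω : Ω) (x : X) :
    (orbCount T θ A n ω x : ℝ) =
      birkhoffSum (skewProduct θ T) ((univ ×ˢ A).indicator 1) n (ω, x) := by
  classical
  simp only [orbCount, birkhoffSum, skewProduct_iterate, Nat.card_eq_fintype_card,
    Fintype.card_subtype, Finset.card_filter, indicator_apply, mem_prod, mem_univ, true_and,
    Pi.one_apply]
  rw [Fin.sum_univ_eq_sum_range (fun i => if itr T θ i ω x ∈ A then 1 else 0) n]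
  push_cast
  rfl

theorem orbCount_le (θ : Ω → Ω) (T : Ω → X → X) (A : Set X) (n : ℕ) (ω : Ω) (x : X) :
    orbCount T θ A n ω x ≤ n := by
  classical
  rw [orbCount, Nat.card_eq_fintype_card]
  exact (Fintype.card_subtype_le _).trans_eq (Fintype.card_fin n)

theorem orbCount_le_bsup (θ : Ω → Ω) (T : Ω → X → X) (E : Set (Ω × X)) (A : Set X) (n : ℕ) (ω : Ω)
    {x : X} (hx : x ∈ fiber E ω) : orbCount T θ A n ω x ≤ bsup T θ E A n ω :=
  le_csSup ⟨n, by rintro _ ⟨y, -, rfl⟩; exact orbCount_le θ T A n ω y⟩ ⟨x, hx, rfl⟩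

theorem exists_orbCount_eq_bsup (θ : Ω → Ω) (T : Ω → X → X) {E : Set (Ω × X)} (A : Set X) (n : ℕ)
    {ω : Ω} (hE : (fiber E ω).Nonempty) :
    ∃ x ∈ fiber E ω, bsup T θ E A n ω = orbCount T θ A n ω x := by
  obtain ⟨y, hy⟩ := hE
  exact Nat.sSup_mem (s := {m | ∃ x ∈ fiber E ω, m = orbCount T θ A n ω x}) ⟨_, y, hy, rfl⟩
    ⟨n, by rintro _ ⟨z, -, rfl⟩; exact orbCount_le θ T A n ω z⟩

theorem bsup_div_le_one (θ : Ω → Ω) (T : Ω → X → X) {E : Set (Ω × X)} (A : Set X) (n : ℕ)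
    {ω : Ω} (hE : (fiber E ω).Nonempty) : (bsup T θ E A n ω : ℝ) / n ≤ 1 := by
  obtain ⟨x, -, h⟩ := exists_orbCount_eq_bsup θ T A n hE
  rw [h]
  exact div_le_one_of_le₀ (Nat.cast_le.2 (orbCount_le θ T A n ω x)) n.cast_nonneg

theorem ocap_eq_zero_iff (θ : Ω → Ω) (T : Ω → X → X) {E : Set (Ω × X)} (A : Set X) {ω : Ω}
    (hE : (fiber E ω).Nonempty) :
    ocap T θ E A ω = 0 ↔ Tendsto (fun n : ℕ => (bsup T θ E A n ω : ℝ) / n) atTop (𝓝 0) := by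
  have h0 (n : ℕ) : 0 ≤ (bsup T θ E A n ω : ℝ) / n := by positivity
  refine ⟨fun h => ?_, fun h => h.limsup_eq⟩
  have hbdd : IsBoundedUnder (· ≤ ·) atTop fun n : ℕ => (bsup T θ E A n ω : ℝ) / n :=
    isBoundedUnder_of ⟨1, fun n => bsup_div_le_one θ T A n hE⟩
  have hbdd' : IsBoundedUnder (· ≥ ·) atTop fun n : ℕ => (bsup T θ E A n ω : ℝ) / n :=
    isBoundedUnder_of ⟨0, h0⟩
  refine tendsto_of_le_liminf_of_limsup_le ?_ h.le hbdd hbdd'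
  exact le_liminf_of_le hbdd.isCoboundedUnder_ge (.of_forall h0)

end BundleRDS

section InvariantMeasure

variable {Ω X : Type*} [MeasurableSpace Ω] {P : Measure Ω} {θ : Ω → Ω}
  {T : Ω → X → X} {E : Set (Ω × X)}

theorem measure_univ_prod_eq_zero_of_ae_ocap_eq_zero [MeasurableSpace X] (hE : MeasurableSet E)
    (hEne : ∀ ω, (fiber E ω).Nonempty) {A : Set X} (hA : MeasurableSet A)
    (hocap : ∀ᵐ ω ∂P, ocap T θ E A ω = 0) {μ : Measure (Ω × X)} [IsProbabilityMeasure μ]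
    (hfst : μ.map Prod.fst = P) (hμE : μ E = 1) (hinv : MeasurePreserving (skewProduct θ T) μ μ) :
    μ (univ ×ˢ A) = 0 := by
  have hAm : MeasurableSet (univ ×ˢ A : Set (Ω × X)) := .prod .univ hA
  have hfm : Measurable ((univ ×ˢ A : Set (Ω × X)).indicator (1 : Ω × X → ℝ)) :=
    measurable_one.indicator hAm
  have hfi : Integrable ((univ ×ˢ A : Set (Ω × X)).indicator (1 : Ω × X → ℝ)) μ :=
    (integrable_const 1).indicator hAm
  have hlim : Tendsto (fun n : ℕ => ∫ p, birkhoffSum (skewProduct θ T)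
      ((univ ×ˢ A : Set (Ω × X)).indicator (1 : Ω × X → ℝ)) n p / n ∂μ) atTop
      (𝓝 (∫ _, (0 : ℝ) ∂μ)) := by
    refine tendsto_integral_of_dominated_convergence (fun _ => 1)
      (fun n => ((integrable_birkhoffSum hinv hfi n).div_const _).aestronglyMeasurable)
      (integrable_const 1) (fun n => .of_forall fun ⟨ω, x⟩ => ?_) ?_
    · rw [← orbCount_eq_birkhoffSum, Real.norm_of_nonneg (by positivity)]
      exact div_le_one_of_le₀ (Nat.cast_le.2 (orbCount_le θ T A n ω x)) n.cast_nonneg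
    · have h1 : ∀ᵐ p ∂μ, p ∈ E := (mem_ae_iff_prob_eq_one hE).2 hμE
      have h2 : ∀ᵐ p ∂μ, ocap T θ E A p.1 = 0 :=
        ae_of_ae_map measurable_fst.aemeasurable (hfst ▸ hocap)
      filter_upwards [h1, h2] with ⟨ω, x⟩ hx hω
      refine squeeze_zero (fun n => ?_) (fun n => ?_) ((ocap_eq_zero_iff θ T A (hEne ω)).1 hω)
      · rw [← orbCount_eq_birkhoffSum]
        positivity
      · rw [← orbCount_eq_birkhoffSum]
        gcongr
        exact orbCount_le_bsup θ T E A n ω hx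
  have hconst : ∀ᶠ n : ℕ in atTop, ∫ p, birkhoffSum (skewProduct θ T)
      ((univ ×ˢ A : Set (Ω × X)).indicator (1 : Ω × X → ℝ)) n p / n ∂μ = μ.real (univ ×ˢ A) := by
    filter_upwards [eventually_ne_atTop 0] with n hn
    rw [integral_div, integral_birkhoffSum hinv hfm hfi,
      mul_div_cancel_left₀ _ (Nat.cast_ne_zero.2 hn), integral_indicator_one hAm]
  have h0 := tendsto_nhds_unique (tendsto_const_nhds.congr' (hconst.mono fun _ h => h.symm)) hlim
  rw [integral_zero, measureReal_eq_zero_iff] at h0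
  exact h0

variable (P θ T E) in
/-- The integrals of those functions of `ω` which dominate `f` on the fibers of `E` up to a
bounded coboundary of the skew product. -/
def majorantIntegrals (f : Ω × X → ℝ) : Set ℝ :=
  {c | ∃ (h : Ω → ℝ) (u : Ω × X → ℝ), Measurable h ∧ Integrable h P ∧ (∃ B, ∀ z, |u z| ≤ B) ∧
    (∀ᵐ ω ∂P, ∀ x ∈ fiber E ω, f (ω, x) ≤ h ω + u (ω, x) - u (skewProduct θ T (ω, x))) ∧
    ∫ ω, h ω ∂P = c}

theorem add_mem_majorantIntegrals {f g : Ω × X → ℝ} {a b : ℝ}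
    (ha : a ∈ majorantIntegrals P θ T E f) (hb : b ∈ majorantIntegrals P θ T E g) :
    a + b ∈ majorantIntegrals P θ T E (f + g) := by
  obtain ⟨h, u, hm, hi, ⟨B, hB⟩, hle, rfl⟩ := ha
  obtain ⟨h', u', hm', hi', ⟨B', hB'⟩, hle', rfl⟩ := hb
  refine ⟨h + h', u + u', hm.add hm', hi.add hi', ⟨B + B', fun z => ?_⟩, ?_, integral_add hi hi'⟩
  · exact (abs_add_le _ _).trans (add_le_add (hB z) (hB' z))
  · filter_upwards [hle, hle'] with ω h1 h2 x hx
    have := h1 x hx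
    have := h2 x hx
    simp only [Pi.add_apply]
    linarith

theorem smul_mem_majorantIntegrals {f : Ω × X → ℝ} {a : ℝ}
    (ha : a ∈ majorantIntegrals P θ T E f) {t : ℝ} (ht : 0 < t) :
    t * a ∈ majorantIntegrals P θ T E (t • f) := by
  obtain ⟨h, u, hm, hi, ⟨B, hB⟩, hle, rfl⟩ := ha
  refine ⟨t • h, t • u, hm.const_smul t, hi.smul t, ⟨t * B, fun z => ?_⟩, ?_,
    integral_const_mul t h⟩
  · rw [Pi.smul_apply, smul_eq_mul, abs_mul, abs_of_pos ht]
    exact mul_le_mul_of_nonneg_left (hB z) ht.le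
  · filter_upwards [hle] with ω h1 x hx
    have := mul_le_mul_of_nonneg_left (h1 x hx) ht.le
    simp only [Pi.smul_apply, smul_eq_mul]
    linarith

theorem ae_birkhoffSum_le_of_le_add_sub (hθ : MeasurePreserving θ P P)
    (hTmap : ∀ᵐ ω ∂P, MapsTo (T ω) (fiber E ω) (fiber E (θ ω))) {f u : Ω × X → ℝ} {h : Ω → ℝ}
    {B : ℝ} (hB : ∀ z, |u z| ≤ B)
    (hle : ∀ᵐ ω ∂P, ∀ x ∈ fiber E ω,
      f (ω, x) ≤ h ω + u (ω, x) - u (skewProduct θ T (ω, x))) :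
    ∀ᵐ ω ∂P, ∀ x ∈ fiber E ω, ∀ n,
      birkhoffSum (skewProduct θ T) f n (ω, x) ≤ birkhoffSum θ h n ω + 2 * B := by
  have hall : ∀ᵐ ω ∂P, ∀ k, MapsTo (T (θ^[k] ω)) (fiber E (θ^[k] ω)) (fiber E (θ (θ^[k] ω))) ∧
      ∀ x ∈ fiber E (θ^[k] ω), f (θ^[k] ω, x) ≤
        h (θ^[k] ω) + u (θ^[k] ω, x) - u (skewProduct θ T (θ^[k] ω, x)) :=
    ae_all_iff.2 fun k => (hθ.iterate k).quasiMeasurePreserving.ae (hTmap.and hle)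
  filter_upwards [hall] with ω hω x hx n
  have key : ∀ n, ∃ y ∈ fiber E (θ^[n] ω), (skewProduct θ T)^[n] (ω, x) = (θ^[n] ω, y) ∧
      birkhoffSum (skewProduct θ T) f n (ω, x) ≤
        birkhoffSum θ h n ω + u (ω, x) - u ((skewProduct θ T)^[n] (ω, x)) := by
    intro n
    induction n with
    | zero => exact ⟨x, hx, rfl, by simp⟩
    | succ n ih =>
      obtain ⟨y, hy, hn, hs⟩ := ih
      obtain ⟨h1, h2⟩ := hω n
      refine ⟨T (θ^[n] ω) y, ?_, ?_, ?_⟩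
      · rw [Function.iterate_succ_apply']
        exact h1 hy
      · rw [Function.iterate_succ_apply', Function.iterate_succ_apply', hn]
        rfl
      · have := h2 y hy
        rw [birkhoffSum_succ, birkhoffSum_succ, Function.iterate_succ_apply', hn]
        rw [hn] at hs
        linarith
  obtain ⟨-, -, -, hs⟩ := key n
  have h1 := (abs_le.1 (hB (ω, x))).2
  have h2 := (abs_le.1 (hB ((skewProduct θ T)^[n] (ω, x)))).1
  linarith

theorem neg_le_of_mem_majorantIntegrals [IsProbabilityMeasure P] (hθ : MeasurePreserving θ P P)
    (hEne : ∀ ω, (fiber E ω).Nonempty)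
    (hTmap : ∀ᵐ ω ∂P, MapsTo (T ω) (fiber E ω) (fiber E (θ ω))) {f : Ω × X → ℝ} {C c : ℝ}
    (hf : ∀ z, -C ≤ f z) (hc : c ∈ majorantIntegrals P θ T E f) : -C ≤ c := by
  obtain ⟨h, u, hm, hi, ⟨B, hB⟩, hle, rfl⟩ := hc
  have hn (n : ℕ) : n * (-C - ∫ ω, h ω ∂P) ≤ 2 * B := by
    have hmono : ∫ _, n * -C ∂P ≤ ∫ ω, (birkhoffSum θ h n ω + 2 * B) ∂P := by
      refine integral_mono_ae (integrable_const _)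
        ((integrable_birkhoffSum hθ hi n).add (integrable_const _)) ?_
      filter_upwards [ae_birkhoffSum_le_of_le_add_sub hθ hTmap hB hle] with ω hω
      obtain ⟨x, hx⟩ := hEne ω
      refine le_trans ?_ (hω x hx n)
      have := Finset.card_nsmul_le_sum (Finset.range n)
        (fun k => f ((skewProduct θ T)^[k] (ω, x))) (-C) fun k _ => hf _
      rwa [Finset.card_range, nsmul_eq_mul] at this
    rw [integral_add (integrable_birkhoffSum hθ hi n) (integrable_const _),
      integral_birkhoffSum hθ hm hi] at hmono
    simp only [integral_const, probReal_univ, one_smul] at hmono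
    linarith
  by_contra! hlt
  obtain ⟨n, hn'⟩ := exists_nat_gt (2 * B / (-C - ∫ ω, h ω ∂P))
  rw [div_lt_iff₀ (sub_pos.2 hlt)] at hn'
  exact (hn n).not_gt hn'

theorem ae_ocap_eq_zero_of_majorantIntegrals [IsProbabilityMeasure P]
    (hθ : MeasurePreserving θ P P) (hEne : ∀ ω, (fiber E ω).Nonempty)
    (hTmap : ∀ᵐ ω ∂P, MapsTo (T ω) (fiber E ω) (fiber E (θ ω))) {A : Set X}
    (hA : ∀ ε > 0, ∃ c ∈ majorantIntegrals P θ T E ((univ ×ˢ A).indicator 1), c < ε) :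
    ∀ᵐ ω ∂P, ocap T θ E A ω = 0 := by
  have hlim := ae_tendsto_div_of_le_birkhoffSum hθ (b := fun n ω => (bsup T θ E A n ω : ℝ))
    (fun _ _ => Nat.cast_nonneg _) fun ε hε => by
      obtain ⟨c, ⟨h, u, hm, hi, ⟨B, hB⟩, hle, rfl⟩, hc⟩ := hA ε hε
      refine ⟨h, 2 * B, hm, hi, hc, ?_⟩
      filter_upwards [ae_birkhoffSum_le_of_le_add_sub hθ hTmap hB hle] with ω hω n
      obtain ⟨x, hx, hb⟩ := exists_orbCount_eq_bsup θ T A n (hEne ω)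
      rw [hb, orbCount_eq_birkhoffSum]
      exact hω x hx n
  filter_upwards [hlim] with ω hω
  exact (ocap_eq_zero_iff θ T A (hEne ω)).2 hω

variable (Ω X) in
/-- The space of bounded real functions. -/
def boundedFunctions : Submodule ℝ (Ω × X → ℝ) where
  carrier := {f | ∃ B, ∀ z, |f z| ≤ B}
  add_mem' := by
    rintro f g ⟨B, hB⟩ ⟨C, hC⟩
    exact ⟨B + C, fun z => (abs_add_le _ _).trans (add_le_add (hB z) (hC z))⟩
  zero_mem' := ⟨0, fun z => by simp⟩
  smul_mem' := by
    rintro t f ⟨B, hB⟩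
    refine ⟨|t| * B, fun z => ?_⟩
    rw [Pi.smul_apply, smul_eq_mul, abs_mul]
    exact mul_le_mul_of_nonneg_left (hB z) (abs_nonneg t)

theorem exists_linearMap_le_majorantIntegrals [IsProbabilityMeasure P]
    (hθ : MeasurePreserving θ P P) (hEne : ∀ ω, (fiber E ω).Nonempty)
    (hTmap : ∀ᵐ ω ∂P, MapsTo (T ω) (fiber E ω) (fiber E (θ ω))) {f₀ : Ω × X → ℝ}
    (hf₀ : f₀ ∈ boundedFunctions Ω X) {c₀ : ℝ}
    (hc₀ : ∀ c ∈ majorantIntegrals P θ T E f₀, c₀ ≤ c) :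
    ∃ Λ : (Ω × X → ℝ) →ₗ[ℝ] ℝ, c₀ ≤ Λ f₀ ∧
      ∀ f ∈ boundedFunctions Ω X, ∀ c ∈ majorantIntegrals P θ T E f, Λ f ≤ c := by
  obtain ⟨Λ, hΛ, hΛ₀⟩ := exists_linearMap_le_of_convexCone
    (fun f : boundedFunctions Ω X => majorantIntegrals P θ T E f)
    (fun f g a ha b hb => add_mem_majorantIntegrals ha hb)
    (fun f a ha t ht => smul_mem_majorantIntegrals ha ht)
    (fun ⟨f, B, hB⟩ => ⟨_, fun _ => B, 0, measurable_const, integrable_const _, ⟨0, by simp⟩,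
      .of_forall fun ω x _ => by simpa using (abs_le.1 (hB (ω, x))).2, rfl⟩)
    (fun ⟨f, B, hB⟩ => ⟨-B, fun c hc =>
      neg_le_of_mem_majorantIntegrals hθ hEne hTmap (fun z => (abs_le.1 (hB z)).1) hc⟩)
    ⟨f₀, hf₀⟩ hc₀
  obtain ⟨Λ', rfl⟩ := Λ.exists_extend
  exact ⟨Λ', hΛ₀, fun f hf => hΛ ⟨f, hf⟩⟩

end InvariantMeasure

theorem indicator_one_mem_boundedFunctions {Ω X : Type*} (S : Set (Ω × X)) :
    S.indicator 1 ∈ boundedFunctions Ω X := by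
  refine ⟨1, fun z => ?_⟩
  by_cases hz : z ∈ S <;> simp [hz]

theorem exists_continuous_nonneg_pos_iff {X : Type*} [PseudoMetricSpace X] {U : Set X}
    (hU : IsOpen U) :
    ∃ φ : X → ℝ, Continuous φ ∧ 0 ≤ φ ∧ {x | 0 < φ x} = U := by
  rcases Uᶜ.eq_empty_or_nonempty with h | h
  · exact ⟨1, continuous_one, zero_le_one, by simp [compl_empty_iff.1 h]⟩
  · refine ⟨fun x => Metric.infDist x Uᶜ, Metric.continuous_infDist_pt _,
      fun _ => Metric.infDist_nonneg, ?_⟩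
    ext x
    rw [mem_ofPred_eq, ← hU.isClosed_compl.notMem_iff_infDist_pos h, notMem_compl_iff]

section FiberContinuous

variable {Ω X : Type*} [MeasurableSpace Ω] {P : Measure Ω} {θ : Ω → Ω}
  {T : Ω → X → X} {E : Set (Ω × X)} {Λ : (Ω × X → ℝ) →ₗ[ℝ] ℝ}

theorem linearMap_le_integral
    (hΛ : ∀ f ∈ boundedFunctions Ω X, ∀ c ∈ majorantIntegrals P θ T E f, Λ f ≤ c)
    {f : Ω × X → ℝ} (hf : f ∈ boundedFunctions Ω X) {h : Ω → ℝ} (hm : Measurable h)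
    (hi : Integrable h P) (hle : ∀ᵐ ω ∂P, ∀ x ∈ fiber E ω, f (ω, x) ≤ h ω) :
    Λ f ≤ ∫ ω, h ω ∂P :=
  hΛ f hf _ ⟨h, 0, hm, hi, ⟨0, by simp⟩, by simpa using hle, rfl⟩

theorem linearMap_nonpos
    (hΛ : ∀ f ∈ boundedFunctions Ω X, ∀ c ∈ majorantIntegrals P θ T E f, Λ f ≤ c)
    {f : Ω × X → ℝ} (hf : f ∈ boundedFunctions Ω X)
    (hle : ∀ᵐ ω ∂P, ∀ x ∈ fiber E ω, f (ω, x) ≤ 0) : Λ f ≤ 0 := by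
  simpa using linearMap_le_integral hΛ hf (h := fun _ => 0) measurable_const
    (integrable_zero _ _ _) hle

theorem linearMap_mono
    (hΛ : ∀ f ∈ boundedFunctions Ω X, ∀ c ∈ majorantIntegrals P θ T E f, Λ f ≤ c)
    {f g : Ω × X → ℝ} (hf : f ∈ boundedFunctions Ω X) (hg : g ∈ boundedFunctions Ω X)
    (hle : f ≤ g) : Λ f ≤ Λ g := by
  have := linearMap_nonpos hΛ (Submodule.sub_mem _ hf hg)
    (.of_forall fun ω x _ => sub_nonpos.2 (hle (ω, x)))
  rwa [map_sub, sub_nonpos] at this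

theorem linearMap_comp_fst
    (hΛ : ∀ f ∈ boundedFunctions Ω X, ∀ c ∈ majorantIntegrals P θ T E f, Λ f ≤ c)
    {h : Ω → ℝ} (hf : h ∘ Prod.fst ∈ boundedFunctions Ω X) (hm : Measurable h)
    (hi : Integrable h P) : Λ (h ∘ Prod.fst) = ∫ ω, h ω ∂P := by
  refine le_antisymm (linearMap_le_integral hΛ hf hm hi (.of_forall fun _ _ _ => le_rfl)) ?_
  have := linearMap_le_integral hΛ (Submodule.neg_mem _ hf) hm.neg hi.neg
    (.of_forall fun _ _ _ => le_rfl)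
  simp only [map_neg, Pi.neg_apply, integral_neg] at this
  linarith

theorem linearMap_comp_skewProduct
    (hΛ : ∀ f ∈ boundedFunctions Ω X, ∀ c ∈ majorantIntegrals P θ T E f, Λ f ≤ c)
    {f : Ω × X → ℝ} (hf : f ∈ boundedFunctions Ω X) : Λ (f ∘ skewProduct θ T) = Λ f := by
  have hf' : f ∘ skewProduct θ T ∈ boundedFunctions Ω X := by
    obtain ⟨B, hB⟩ := hf
    exact ⟨B, fun z => hB _⟩
  have hneg : -f ∈ boundedFunctions Ω X := Submodule.neg_mem _ hf
  have h1 := hΛ (f ∘ skewProduct θ T - f) (Submodule.sub_mem _ hf' hf) 0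
    ⟨0, -f, measurable_const, integrable_zero _ _ _, hneg,
      .of_forall fun ω x _ => by simp, by simp⟩
  have h2 := hΛ (f - f ∘ skewProduct θ T) (Submodule.sub_mem _ hf hf') 0
    ⟨0, f, measurable_const, integrable_zero _ _ _, hf, .of_forall fun ω x _ => by simp, by simp⟩
  rw [map_sub] at h1 h2
  linarith

variable [MeasurableSpace X]

variable (P E) in
/-- The algebra of bounded measurable functions that are continuous on almost all fibers of `E`. -/
def fiberContinuousFunctions [TopologicalSpace X] : Subalgebra ℝ (Ω × X → ℝ) where
  carrier := {f | Measurable f ∧ f ∈ boundedFunctions Ω X ∧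
    ∀ᵐ ω ∂P, ContinuousOn (fun x => f (ω, x)) (fiber E ω)}
  add_mem' := by
    rintro f g ⟨hf, hfb, hfc⟩ ⟨hg, hgb, hgc⟩
    refine ⟨hf.add hg, Submodule.add_mem _ hfb hgb, ?_⟩
    filter_upwards [hfc, hgc] with ω h1 h2 using h1.add h2
  mul_mem' := by
    rintro f g ⟨hf, ⟨B, hB⟩, hfc⟩ ⟨hg, ⟨C, hC⟩, hgc⟩
    refine ⟨hf.mul hg, ⟨B * C, fun z => ?_⟩, ?_⟩
    · rw [Pi.mul_apply, abs_mul]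
      exact mul_le_mul (hB z) (hC z) (abs_nonneg _) ((abs_nonneg _).trans (hB z))
    · filter_upwards [hfc, hgc] with ω h1 h2 using h1.mul h2
  algebraMap_mem' r := ⟨measurable_const, ⟨|r|, fun _ => le_rfl⟩, .of_forall fun _ =>
    continuousOn_const⟩

section Topological

variable [TopologicalSpace X]

theorem sup_zero_mem_fiberContinuousFunctions {f : Ω × X → ℝ}
    (hf : f ∈ fiberContinuousFunctions P E) : f ⊔ 0 ∈ fiberContinuousFunctions P E := by
  obtain ⟨hm, ⟨B, hB⟩, hc⟩ := hf
  refine ⟨hm.sup measurable_const, ⟨B, fun z => ?_⟩, ?_⟩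
  · refine le_trans ?_ (hB z)
    rw [Pi.sup_apply, Pi.zero_apply, abs_of_nonneg le_sup_right]
    exact sup_le (le_abs_self _) (abs_nonneg _)
  · filter_upwards [hc] with ω h using h.sup continuousOn_const

theorem comp_skewProduct_mem_fiberContinuousFunctions (hθ : MeasurePreserving θ P P)
    (hTm : Measurable fun p : Ω × X => T p.1 p.2)
    (hTmap : ∀ᵐ ω ∂P, MapsTo (T ω) (fiber E ω) (fiber E (θ ω)))
    (hTc : ∀ᵐ ω ∂P, ContinuousOn (T ω) (fiber E ω)) {f : Ω × X → ℝ}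
    (hf : f ∈ fiberContinuousFunctions P E) :
    f ∘ skewProduct θ T ∈ fiberContinuousFunctions P E := by
  obtain ⟨hm, ⟨B, hB⟩, hc⟩ := hf
  refine ⟨hm.comp ((hθ.measurable.comp measurable_fst).prodMk hTm), ⟨B, fun z => hB _⟩, ?_⟩
  filter_upwards [hTmap, hTc, hθ.quasiMeasurePreserving.ae hc] with ω h1 h2 h3
  exact h3.comp h2 h1

theorem indicator_comp_fst_mem_fiberContinuousFunctions {A : Set Ω} (hA : MeasurableSet A) :
    (A.indicator 1 : Ω → ℝ) ∘ Prod.fst ∈ fiberContinuousFunctions (X := X) P E :=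
  ⟨(measurable_one.indicator hA).comp measurable_fst,
    indicator_one_mem_boundedFunctions (Prod.fst ⁻¹' A), .of_forall fun ω =>
      continuousOn_const (c := A.indicator (1 : Ω → ℝ) ω)⟩

theorem indicator_compl_mem_fiberContinuousFunctions (hE : MeasurableSet E) :
    Eᶜ.indicator 1 ∈ fiberContinuousFunctions P E := by
  refine ⟨measurable_one.indicator hE.compl, indicator_one_mem_boundedFunctions _,
    .of_forall fun ω => continuousOn_const (c := (0 : ℝ)) |>.congr fun x hx => ?_⟩
  exact indicator_of_notMem (s := Eᶜ) (notMem_compl_iff.2 hx) 1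

theorem comp_snd_mem_fiberContinuousFunctions [CompactSpace X] [BorelSpace X] {φ : X → ℝ}
    (hφ : Continuous φ) : φ ∘ Prod.snd ∈ fiberContinuousFunctions P E := by
  obtain ⟨B, hB⟩ := isCompact_univ.exists_bound_of_continuousOn hφ.continuousOn
  exact ⟨hφ.measurable.comp measurable_snd, ⟨B, fun z => hB z.2 (mem_univ _)⟩,
    .of_forall fun _ => hφ.continuousOn⟩

theorem tendsto_map_of_antitone [PolishSpace X] [BorelSpace X] [IsProbabilityMeasure P]
    [P.IsComplete] (hE : MeasurableSet E) (hEcp : ∀ ω, IsCompact (fiber E ω))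
    (hΛ : ∀ f ∈ boundedFunctions Ω X, ∀ c ∈ majorantIntegrals P θ T E f, Λ f ≤ c)
    {f : ℕ → Ω × X → ℝ} (hf : ∀ n, f n ∈ fiberContinuousFunctions P E) (hanti : Antitone f)
    (hlim : ∀ z, Tendsto (fun n => f n z) atTop (𝓝 0)) :
    Tendsto (fun n => Λ (f n)) atTop (𝓝 0) := by
  have h0 (n : ℕ) : 0 ≤ f n := fun z =>
    Antitone.le_of_tendsto (fun i j hij => hanti hij z) (hlim z) n
  have hΛ0 (n : ℕ) : 0 ≤ Λ (f n) := by
    simpa using linearMap_mono hΛ (Submodule.zero_mem _) (hf n).2.1 (h0 n)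
  obtain ⟨C, hC⟩ := (hf 0).2.1
  have hfC (n : ℕ) (z : Ω × X) : f n z ≤ C := (hanti n.zero_le z).trans ((abs_le.1 (hC z)).2)
  refine tendsto_order.2 ⟨fun a ha => .of_forall fun n => ha.trans_le (hΛ0 n), fun ε hε => ?_⟩
  let D : ℕ → Set Ω := fun n => Prod.fst '' (E ∩ {z | ε / 2 ≤ f n z})
  have hDm (n : ℕ) : MeasurableSet (D n) :=
    MeasurableSet.image_fst_of_isComplete P
      (hE.inter (measurableSet_le measurable_const (hf n).1))
  have hDanti : Antitone D := fun i j hij =>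
    image_mono (inter_subset_inter_right _ fun z hz => hz.trans (hanti hij z))
  have hDnull : P (⋂ n, D n) = 0 := by
    refine measure_mono_null (fun ω hω => ?_) (ae_iff.1 (ae_all_iff.2 fun n => (hf n).2.2))
    intro hcont
    have hclosed (n : ℕ) : IsClosed (fiber E ω ∩ {x | ε / 2 ≤ f n (ω, x)}) :=
      (hcont n).preimage_isClosed_of_isClosed (hEcp ω).isClosed isClosed_Ici
    obtain ⟨x, hx⟩ := IsCompact.nonempty_iInter_of_sequence_nonempty_isCompact_isClosed
      (fun n => fiber E ω ∩ {x | ε / 2 ≤ f n (ω, x)})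
      (fun n => inter_subset_inter_right _ fun x hx => le_trans hx (hanti n.le_succ (ω, x)))
      (fun n => by
        obtain ⟨⟨_, x⟩, hx, rfl⟩ := mem_iInter.1 hω n
        exact ⟨x, hx⟩)
      ((hEcp ω).of_isClosed_subset (hclosed 0) inter_subset_left) hclosed
    exact (half_pos hε).not_ge
      (ge_of_tendsto' (hlim (ω, x)) fun n => (mem_iInter.1 hx n).2)
  have hDlim : Tendsto (fun n => ε / 2 + C * P.real (D n)) atTop (𝓝 (ε / 2)) := by
    have h1 := tendsto_measure_iInter_atTop (μ := P) (fun n => (hDm n).nullMeasurableSet) hDanti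
      ⟨0, measure_ne_top _ _⟩
    rw [hDnull] at h1
    have h2 := (ENNReal.tendsto_toReal ENNReal.zero_ne_top).comp h1
    simpa [measureReal_def] using (h2.const_mul C).const_add (ε / 2)
  filter_upwards [hDlim.eventually_lt_const (half_lt_self hε)] with n hn
  refine lt_of_le_of_lt ?_ hn
  have hi : Integrable ((D n).indicator fun _ => C) P := (integrable_const C).indicator (hDm n)
  have hle := linearMap_le_integral hΛ (hf n).2.1
    (h := fun ω => ε / 2 + (D n).indicator (fun _ => C) ω)
    (measurable_const.add (measurable_const.indicator (hDm n))) ((integrable_const _).add hi)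
    (.of_forall fun ω x hx => by
      by_cases hω : ω ∈ D n
      · rw [indicator_of_mem hω]
        linarith [hfC n (ω, x)]
      · rw [indicator_of_notMem hω, add_zero]
        by_contra! hlt
        exact hω ⟨(ω, x), ⟨hx, hlt.le⟩, rfl⟩)
  rw [integral_add (integrable_const _) hi, integral_indicator_const _ (hDm n)] at hle
  simpa [mul_comm] using hle

end Topological

section Metric

variable [MetricSpace X] [CompactSpace X] [BorelSpace X]

theorem prod_eq_generateFrom_fiberContinuousFunctions :
    (inferInstance : MeasurableSpace (Ω × X)) = MeasurableSpace.generateFrom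
      {S | ∃ g ∈ fiberContinuousFunctions P E, 0 ≤ g ∧ {z : Ω × X | 0 < g z} = S} := by
  apply le_antisymm
  · refine sup_le ?_ ?_
    · rintro _ ⟨A, hA, rfl⟩
      refine MeasurableSpace.measurableSet_generateFrom
        ⟨_, indicator_comp_fst_mem_fiberContinuousFunctions hA,
          fun z => indicator_nonneg (fun _ _ => zero_le_one) _, ?_⟩
      ext z
      by_cases hz : z.1 ∈ A <;> simp [hz]
    · refine Measurable.comap_le (@measurable_of_isOpen _ _ _ _ _ (_) _ fun U hU => ?_)
      obtain ⟨φ, hφ, h0, rfl⟩ := exists_continuous_nonneg_pos_iff hU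
      exact MeasurableSpace.measurableSet_generateFrom
        ⟨_, comp_snd_mem_fiberContinuousFunctions hφ, fun z => h0 _, rfl⟩
  · refine MeasurableSpace.generateFrom_le ?_
    rintro _ ⟨g, hg, -, rfl⟩
    exact measurableSet_lt measurable_const hg.1

theorem exists_invariant_measure_of_linearMap [IsProbabilityMeasure P] [P.IsComplete]
    (hθ : MeasurePreserving θ P P) (hE : MeasurableSet E) (hEcp : ∀ ω, IsCompact (fiber E ω))
    (hTm : Measurable fun p : Ω × X => T p.1 p.2)
    (hTmap : ∀ᵐ ω ∂P, MapsTo (T ω) (fiber E ω) (fiber E (θ ω)))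
    (hTc : ∀ᵐ ω ∂P, ContinuousOn (T ω) (fiber E ω))
    (hΛ : ∀ f ∈ boundedFunctions Ω X, ∀ c ∈ majorantIntegrals P θ T E f, Λ f ≤ c) :
    ∃ μ : Measure (Ω × X), IsProbabilityMeasure μ ∧ μ.map Prod.fst = P ∧ μ E = 1 ∧
      μ.map (skewProduct θ T) = μ ∧ ∀ A : Set X, IsClosed A →
        μ (univ ×ˢ A)ᶜ ≤ ENNReal.ofReal (1 - Λ ((univ ×ˢ A).indicator 1)) := by
  have hΘ : Measurable (skewProduct θ T) := (hθ.measurable.comp measurable_fst).prodMk hTm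
  obtain ⟨μ, hμ⟩ := exists_measure_tendsto_of_positive_functional (Λ := Λ)
    (L := fiberContinuousFunctions P E)
    (fun f hf => sup_zero_mem_fiberContinuousFunctions hf) (fun f hf => hf.1)
    (prod_eq_generateFrom_fiberContinuousFunctions (P := P) (E := E)).le
    (fun f hf h0 => by simpa using linearMap_mono hΛ (Submodule.zero_mem _) hf.2.1 h0)
    (fun f hf hanti hlim => tendsto_map_of_antitone hE hEcp hΛ hf hanti hlim)
  have hind {S : Set (Ω × X)} (hS : S.indicator 1 ∈ fiberContinuousFunctions P E) :
      μ S = ENNReal.ofReal (Λ (S.indicator 1)) := by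
    have h0 : (0 : Ω × X → ℝ) ≤ S.indicator 1 := indicator_nonneg fun _ _ => zero_le_one
    have hpos : {z | 0 < S.indicator (1 : Ω × X → ℝ) z} = S := by
      ext z
      by_cases hz : z ∈ S <;> simp [hz]
    have hlim := hμ _ hS h0
    rw [hpos] at hlim
    refine tendsto_nhds_unique hlim (tendsto_const_nhds.congr' ?_)
    filter_upwards [eventually_ge_atTop 1] with k hk
    congr 2
    ext z
    by_cases hz : z ∈ S <;> simp [hz, hk]
  have hfst : μ.map Prod.fst = P := by
    ext A hA
    have hmem := indicator_comp_fst_mem_fiberContinuousFunctions (P := P) (E := E) hA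
    rw [Measure.map_apply measurable_fst hA, hind (S := Prod.fst ⁻¹' A) hmem,
      show (Prod.fst ⁻¹' A).indicator (1 : Ω × X → ℝ) = A.indicator 1 ∘ Prod.fst from rfl,
      linearMap_comp_fst hΛ hmem.2.1 (measurable_one.indicator hA)
        ((integrable_const 1).indicator hA), integral_indicator_one hA, ofReal_measureReal]
  have hprob : IsProbabilityMeasure μ := ⟨by
    rw [← preimage_univ (f := Prod.fst), ← Measure.map_apply measurable_fst .univ, hfst,
      measure_univ]⟩
  refine ⟨μ, hprob, hfst, ?_, ?_, fun A hA => ?_⟩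
  · rw [← prob_compl_eq_zero_iff hE, hind (indicator_compl_mem_fiberContinuousFunctions hE),
      ENNReal.ofReal_eq_zero]
    exact linearMap_nonpos hΛ (indicator_one_mem_boundedFunctions _)
      (.of_forall fun ω x hx => (indicator_of_notMem (s := Eᶜ) (notMem_compl_iff.2 hx) 1).le)
  · refine ext_of_generate_finite _
      (prod_eq_generateFrom_fiberContinuousFunctions (P := P) (E := E)) ?_ ?_ ?_
    · rintro _ ⟨f, hf, hf0, rfl⟩ _ ⟨g, hg, hg0, rfl⟩ -
      refine ⟨f * g, Subalgebra.mul_mem _ hf hg, mul_nonneg hf0 hg0, ?_⟩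
      ext z
      simp only [mem_ofPred_eq, mem_inter_iff, Pi.mul_apply]
      exact ⟨fun h => ⟨(hf0 z).lt_of_ne' (left_ne_zero_of_mul h.ne'),
        (hg0 z).lt_of_ne' (right_ne_zero_of_mul h.ne')⟩, fun h => mul_pos h.1 h.2⟩
    · rintro _ ⟨g, hg, h0, rfl⟩
      rw [Measure.map_apply hΘ (measurableSet_lt measurable_const hg.1)]
      refine tendsto_nhds_unique (hμ _
        (comp_skewProduct_mem_fiberContinuousFunctions hθ hTm hTmap hTc hg)
        fun z => h0 (skewProduct θ T z))
        ((hμ g hg h0).congr fun k => congrArg _ ?_)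
      exact (linearMap_comp_skewProduct hΛ
        (min_one_nsmul_mem (fun f hf => sup_zero_mem_fiberContinuousFunctions hf) hg k).2.1).symm
    · rw [Measure.map_apply hΘ .univ, preimage_univ]
  · obtain ⟨φ, hφ, h0, hφA⟩ := exists_continuous_nonneg_pos_iff hA.isOpen_compl
    have hmem := comp_snd_mem_fiberContinuousFunctions (P := P) (E := E) hφ
    have hset : {z : Ω × X | 0 < (φ ∘ Prod.snd) z} = (univ ×ˢ A)ᶜ := by
      rw [univ_prod, ← preimage_compl, ← hφA]
      rfl
    have hone : Λ 1 = 1 := by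
      have h1 : (1 : Ω → ℝ) ∘ Prod.fst ∈ boundedFunctions Ω X := ⟨1, fun _ => by simp⟩
      simpa using linearMap_comp_fst hΛ h1 measurable_one (integrable_const 1)
    rw [← hone, ← map_sub, ← hset]
    refine le_of_tendsto' (hμ _ hmem fun z => h0 _) fun k => ENNReal.ofReal_le_ofReal ?_
    have h1 : (1 : Ω × X → ℝ) ∈ boundedFunctions Ω X := ⟨1, fun _ => by simp⟩
    refine linearMap_mono hΛ
      (min_one_nsmul_mem (fun f hf => sup_zero_mem_fiberContinuousFunctions hf) hmem k).2.1
      (Submodule.sub_mem _ h1 (indicator_one_mem_boundedFunctions _)) fun z => ?_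
    by_cases hz : z ∈ (univ ×ˢ A : Set (Ω × X))
    · have hz0 : φ z.2 = 0 := le_antisymm
        (not_lt.1 fun h => hset.le h hz) (h0 _)
      simp [indicator_of_mem hz, hz0]
    · simp [indicator_of_notMem hz]

end Metric

end FiberContinuous

theorem stmt17
    {Ω X : Type*} [MeasurableSpace Ω]
    (P : MeasureTheory.Measure Ω) [MeasureTheory.IsProbabilityMeasure P] [P.IsComplete]
    [MetricSpace X] [CompactSpace X] [MeasurableSpace X] [BorelSpace X]
    (θ : Ω → Ω) (hθ : MeasureTheory.MeasurePreserving θ P P)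
    (E : Set (Ω × X)) (hE : MeasurableSet E)
    (hEne : ∀ ω, (fiber E ω).Nonempty) (hEcp : ∀ ω, IsCompact (fiber E ω))
    (T : Ω → X → X) (hTm : Measurable fun p : Ω × X => T p.1 p.2)
    (hTmap : ∀ᵐ ω ∂P, Set.MapsTo (T ω) (fiber E ω) (fiber E (θ ω)))
    (hTc : ∀ᵐ ω ∂P, ContinuousOn (T ω) (fiber E ω))
    (E' : Set X) (hE' : IsClosed E') :
    (∀ᵐ ω ∂P, ocap T θ E E' ω = 0) ↔
      ∀ μ : MeasureTheory.Measure (Ω × X), MeasureTheory.IsProbabilityMeasure μ →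
        μ.map Prod.fst = P → μ E = 1 →
        μ.map (fun p : Ω × X => (θ p.1, T p.1 p.2)) = μ →
        μ (Set.univ ×ˢ E') = 0 := by
  refine ⟨fun hocap μ _ hfst hμE hinv => ?_, fun hμ => ?_⟩
  · exact measure_univ_prod_eq_zero_of_ae_ocap_eq_zero hE hEne hE'.measurableSet hocap hfst hμE
      ⟨(hθ.measurable.comp measurable_fst).prodMk hTm, hinv⟩
  · refine ae_ocap_eq_zero_of_majorantIntegrals hθ hEne hTmap fun c₀ hc₀ => ?_
    by_contra! hge
    obtain ⟨Λ, hΛ₀, hΛ⟩ := exists_linearMap_le_majorantIntegrals hθ hEne hTmap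
      (indicator_one_mem_boundedFunctions (univ ×ˢ E')) hge
    obtain ⟨μ, hprob, hfst, hμE, hinv, hle⟩ :=
      exists_invariant_measure_of_linearMap hθ hE hEcp hTm hTmap hTc hΛ
    have h1 := hle E' hE'
    rw [(prob_compl_eq_one_iff (.prod .univ hE'.measurableSet)).2 (hμ μ hprob hfst hμE hinv),
      ENNReal.one_le_ofReal] at h1
    linarith
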